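/- arXiv:1707.06531 — 3 statements merged into one kernel-verified Lean document; each statement's English description precedes it below -/
import Mathlib

section
/- Let q be an odd prime power, let n be an odd positive integer, and let χ_2 be the quadratic character of the finite field F_{q^n}. Then for every integer g ≥ 1 and every x ∈ F_{q^n}, the sum over all triples (f1, f2, f3) ∈ F̂_g of χ_2((f1·f3)(x)) + χ_2((f2·f3)(x)) + χ_2((f1·f2)(x)) equals 0, where polynomials in F_q[X] are evaluated at x via the inclusion F_q ⊆ F_{q^n}. -/
open Polynomial Classical

noncomputable section

/-- Quadratic character of a field `K`: 1 on nonzero squares, -1 on nonsquares, 0 at 0. -/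
def quadCharFn (K : Type*) [Field K] (a : K) : ℤ :=
  if a = 0 then 0 else if IsSquare a then 1 else -1

/-- Quadratic residue symbol modulo `P`: 1 if `F` is a nonzero square mod `P`,
-1 if a nonsquare, 0 if `P ∣ F`. -/
def chiP {Fq : Type*} [Field Fq] (P F : Fq[X]) : ℤ :=
  if P ∣ F then 0 else if ∃ G, P ∣ (F - G ^ 2) then 1 else -1

/-- The genus function `L(d1,d2,d3)`. -/
def Lg (d1 d2 d3 : ℕ) : ℕ :=
  if Even (d1 + d3) ∧ Even (d2 + d3) then d1 + d2 + d3 else d1 + d2 + d3 + 1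

/-- The parameter set `F̂_g` of triples of square-free pairwise coprime polynomials,
`f3` monic, satisfying the genus condition and avoiding the degenerate degrees. -/
def FhatSet (Fq : Type*) [Field Fq] (g : ℕ) : Set (Fq[X] × Fq[X] × Fq[X]) :=
  {t | Squarefree t.1 ∧ Squarefree t.2.1 ∧ Squarefree t.2.2 ∧
       IsCoprime t.1 t.2.1 ∧ IsCoprime t.1 t.2.2 ∧ IsCoprime t.2.1 t.2.2 ∧
       t.2.2.Monic ∧
       Lg t.1.natDegree t.2.1.natDegree t.2.2.natDegree = g + 3 ∧
       ({t.1.natDegree, t.2.1.natDegree, t.2.2.natDegree} : Multiset ℕ) ≠ {g + 3, 0, 0} ∧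
       ({t.1.natDegree, t.2.1.natDegree, t.2.2.natDegree} : Multiset ℕ) ≠ {g + 2, 0, 0}}

/-- The parameter set `F_g`: triples in `F̂_g` with all three polynomials monic. -/
def FSet (Fq : Type*) [Field Fq] (g : ℕ) : Set (Fq[X] × Fq[X] × Fq[X]) :=
  {t | t ∈ FhatSet Fq g ∧ t.1.Monic ∧ t.2.1.Monic}

end

/-!
Let `a ∈ F_q` be a nonsquare. Since `n` is odd, `a` remains a nonsquare in `F_{q^n}`: if `a = b²`
there, taking norms makes `a ^ n` a square in `F_q`, hence also `a`. Scaling `f₁` by `a`, or `f₂`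
by `a`, permutes `F̂_g`, as only `f₃` is required to be monic. The first permutation changes the
sign of `χ₂((f₁f₃)(x))` and `χ₂((f₁f₂)(x))`, the second that of `χ₂((f₂f₃)(x))`, so the sum of each
of the three characters over `F̂_g` equals its own negative.
-/

theorem quadCharFn_eq_quadraticChar {K : Type*} [Field K] [Fintype K] (y : K) :
    quadCharFn K y = quadraticChar K y := by
  simp only [quadCharFn, quadraticChar_apply, quadraticCharFun]
  congr

theorem quadCharFn_mul_of_not_isSquare {K : Type*} [Field K] [Finite K] {a : K}
    (ha : ¬ IsSquare a) (y : K) : quadCharFn K (a * y) = -quadCharFn K y := by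
  have := Fintype.ofFinite K
  rw [quadCharFn_eq_quadraticChar, quadCharFn_eq_quadraticChar, map_mul,
    quadraticChar_neg_one_iff_not_isSquare.mpr ha, neg_one_mul]

theorem isSquare_of_isSquare_pow_of_odd {G : Type*} [CommGroupWithZero G] {a : G} {n : ℕ}
    (hn : Odd n) (h : IsSquare (a ^ n)) : IsSquare a := by
  obtain rfl | ha := eq_or_ne a 0
  · exact IsSquare.zero
  obtain ⟨m, rfl⟩ := hn
  have hdiv : a = a ^ (2 * m + 1) / a ^ (2 * m) := by
    rw [pow_succ, mul_div_cancel_left₀ a (pow_ne_zero _ ha)]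
  rw [hdiv]
  exact h.div ((even_two_mul m).isSquare_pow a)

theorem isSquare_of_isSquare_algebraMap_of_odd_finrank {F A : Type*} [Field F] [Ring A]
    [Algebra F A] (hodd : Odd (Module.finrank F A)) {a : F} (h : IsSquare (algebraMap F A a)) :
    IsSquare a := by
  have hnorm := h.map (Algebra.norm F)
  rw [Algebra.norm_algebraMap] at hnorm
  exact isSquare_of_isSquare_pow_of_odd hodd hnorm

theorem finrank_eq_of_card_eq_pow {F V : Type*} [DivisionRing F] [Fintype F] [AddCommGroup V]
    [Module F V] [Fintype V] {n : ℕ} (h : Fintype.card V = Fintype.card F ^ n) :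
    Module.finrank F V = n :=
  Nat.pow_right_injective (Fintype.one_lt_card (α := F))
    ((Module.card_eq_pow_finrank (K := F) (V := V)).symm.trans h)

theorem exists_unit_not_isSquare_of_odd_card {F : Type*} [Field F] [Fintype F]
    (hodd : Odd (Fintype.card F)) : ∃ u : Fˣ, ¬ IsSquare (u : F) := by
  have hchar : ringChar F ≠ 2 := fun h ↦
    Nat.not_even_iff_odd.mpr hodd (Nat.even_iff.mpr (FiniteField.even_card_of_char_two h))
  obtain ⟨a, ha⟩ := FiniteField.exists_nonsquare hchar
  have ha₀ : a ≠ 0 := fun h ↦ ha (h ▸ IsSquare.zero)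
  exact ⟨Units.mk0 a ha₀, ha⟩

theorem finsum_mem_eq_zero_of_perm_neg {α M : Type*} [AddCommGroup M] [IsAddTorsionFree M]
    {s : Set α} {f : α → M} (e : Equiv.Perm α) (hs : ∀ t, e t ∈ s ↔ t ∈ s)
    (hf : ∀ t, f (e t) = -f t) : ∑ᶠ t ∈ s, f t = 0 := by
  rw [← self_eq_neg]
  calc ∑ᶠ t ∈ s, f t = ∑ᶠ t ∈ s, f (e t) := by
        rw [← finsum_comp_equiv e]
        simp only [hs]
    _ = -∑ᶠ t ∈ s, f t := by simp only [hf, finsum_neg_distrib]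

theorem finite_setOf_natDegree_le {R : Type*} [Semiring R] [Finite R] (n : ℕ) :
    {p : R[X] | p.natDegree ≤ n}.Finite := by
  have : Finite (degreeLT R (n + 1)) := .of_equiv _ (degreeLTEquiv R (n + 1)).symm.toEquiv
  refine (Set.toFinite (degreeLT R (n + 1) : Set R[X])).subset fun p hp ↦ ?_
  exact mem_degreeLT.mpr (degree_le_natDegree.trans_lt (mod_cast Nat.lt_succ_of_le hp))

theorem squarefree_group_smul_iff {G A : Type*} [Group G] [Monoid A] [MulAction G A]
    [SMulCommClass G A A] [IsScalarTower G A A] (u : G) {p : A} :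
    Squarefree (u • p) ↔ Squarefree p := by
  have hassoc : Associated (p * u • 1) p := associated_mul_unit_left p (u • 1) (isUnit_one.smul u)
  rw [mul_smul_one] at hassoc
  exact hassoc.squarefree_iff

theorem natDegree_group_smul {G R : Type*} [Group G] [Semiring R] [DistribMulAction G R] (u : G)
    (p : R[X]) : (u • p).natDegree = p.natDegree :=
  natDegree_smul_of_smul_regular p (isSMulRegular_of_group u)

theorem add_add_le_Lg (d₁ d₂ d₃ : ℕ) : d₁ + d₂ + d₃ ≤ Lg d₁ d₂ d₃ := by
  unfold Lg
  split_ifs <;> omega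

section FhatSet

variable {F : Type*} [Field F] {g : ℕ}

theorem finite_FhatSet [Finite F] : (FhatSet F g).Finite := by
  have hfin := finite_setOf_natDegree_le (R := F) (g + 3)
  refine (hfin.prod (hfin.prod hfin)).subset ?_
  rintro ⟨f₁, f₂, f₃⟩ ⟨-, -, -, -, -, -, -, hgenus, -⟩
  have hsum : f₁.natDegree + f₂.natDegree + f₃.natDegree ≤ g + 3 :=
    (add_add_le_Lg _ _ _).trans_eq hgenus
  simp only [Set.mem_prod, Set.mem_ofPred_eq]
  omega

theorem smul_smul_mem_FhatSet_iff (u v : Fˣ) {f₁ f₂ f₃ : F[X]} :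
    (u • f₁, v • f₂, f₃) ∈ FhatSet F g ↔ (f₁, f₂, f₃) ∈ FhatSet F g := by
  simp only [FhatSet, Set.mem_ofPred_eq, squarefree_group_smul_iff, natDegree_group_smul,
    isCoprime_group_smul_left, isCoprime_group_smul_right]

theorem finsum_mem_FhatSet_eq_zero_of_smul_smul_neg {M : Type*} [AddCommGroup M]
    [IsAddTorsionFree M] {φ : F[X] × F[X] × F[X] → M} (u v : Fˣ)
    (hφ : ∀ f₁ f₂ f₃, φ (u • f₁, v • f₂, f₃) = -φ (f₁, f₂, f₃)) :
    ∑ᶠ t ∈ FhatSet F g, φ t = 0 :=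
  finsum_mem_eq_zero_of_perm_neg
    ((MulAction.toPerm u).prodCongr ((MulAction.toPerm v).prodCongr (Equiv.refl _)))
    (fun _ ↦ smul_smul_mem_FhatSet_iff u v) (fun _ ↦ hφ _ _ _)

end FhatSet

theorem quadCharFn_aeval_smul_of_not_isSquare {F K : Type*} [Field F] [Field K] [Finite K]
    [Algebra F K] {u : Fˣ} (hu : ¬ IsSquare (algebraMap F K u)) (x : K) (p : F[X]) :
    quadCharFn K (aeval x (u • p)) = -quadCharFn K (aeval x p) := by
  rw [Units.smul_def, map_smul, Algebra.smul_def, quadCharFn_mul_of_not_isSquare hu]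

/-- for odd `n`, for every `x ∈ F_{q^n}`, the sum over `F̂_g` of
`χ₂((f1f3)(x)) + χ₂((f2f3)(x)) + χ₂((f1f2)(x))` vanishes. -/
theorem stmt0 (q : ℕ) (hq_odd : Odd q) (hq_pp : IsPrimePow q)
    (n : ℕ) (hn_pos : 0 < n) (hn_odd : Odd n)
    (Fq : Type) [Field Fq] [Fintype Fq] (hFq : Fintype.card Fq = q)
    (K : Type) [Field K] [Fintype K] [Algebra Fq K] (hK : Fintype.card K = q ^ n)
    (g : ℕ) (hg : 1 ≤ g) (x : K) :
    (∑ᶠ t ∈ FhatSet Fq g,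
        (quadCharFn K (aeval x (t.1 * t.2.2)) + quadCharFn K (aeval x (t.2.1 * t.2.2)) +
          quadCharFn K (aeval x (t.1 * t.2.1)))) = 0 := by
  subst hFq
  obtain ⟨u, hu⟩ := exists_unit_not_isSquare_of_odd_card hq_odd
  have hodd : Odd (Module.finrank Fq K) := (finrank_eq_of_card_eq_pow hK).symm ▸ hn_odd
  have huK : ¬ IsSquare (algebraMap Fq K u) :=
    mt (isSquare_of_isSquare_algebraMap_of_odd_finrank hodd) hu
  have hflip := quadCharFn_aeval_smul_of_not_isSquare huK x
  have h₁₃ : ∑ᶠ t ∈ FhatSet Fq g, quadCharFn K (aeval x (t.1 * t.2.2)) = 0 :=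
    finsum_mem_FhatSet_eq_zero_of_smul_smul_neg u 1 fun f₁ f₂ f₃ ↦ by
      rw [smul_mul_assoc, hflip]
  have h₂₃ : ∑ᶠ t ∈ FhatSet Fq g, quadCharFn K (aeval x (t.2.1 * t.2.2)) = 0 :=
    finsum_mem_FhatSet_eq_zero_of_smul_smul_neg 1 u fun f₁ f₂ f₃ ↦ by
      rw [smul_mul_assoc, hflip]
  have h₁₂ : ∑ᶠ t ∈ FhatSet Fq g, quadCharFn K (aeval x (t.1 * t.2.1)) = 0 :=
    finsum_mem_FhatSet_eq_zero_of_smul_smul_neg u 1 fun f₁ f₂ f₃ ↦ by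
      rw [one_smul, smul_mul_assoc, hflip]
  rw [finsum_mem_add_distrib finite_FhatSet, finsum_mem_add_distrib finite_FhatSet, h₁₃, h₂₃, h₁₂,
    add_zero, add_zero]
end

section
/- Let q be an odd prime power, let n be a positive integer, let χ_2 be the quadratic character of F_{q^n}, and let F ∈ F_q[X]. Then the sum of χ_2(F(x)) over all x ∈ F_{q^n} whose minimal polynomial over F_q has degree exactly n equals n times the sum of χ_P(F) over all monic irreducible polynomials P ∈ F_q[X] of degree n. -/
open Polynomial Classical

/-!
An `x ∈ K` whose degree over `k` is `[K : k]` generates `K`, so evaluation at `x` identifies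
`k[X] / (minpoly k x)` with `K` and `χ₂(F(x)) = χ_P(F)` for `P = minpoly k x`. Every monic
irreducible `P` of degree `[K : k]` is such a minimal polynomial, and it is attained at exactly its
`[K : k]` conjugate roots, because a finite extension of finite fields is Galois.
-/

theorem finsum_mem_comp_eq_nsmul_finsum_mem_image {α β M : Type*} [AddCommMonoid M] {s : Set α}
    (hs : s.Finite) (g : α → β) (f : β → M) {n : ℕ}
    (hfiber : ∀ a ∈ s, {x ∈ s | g x = g a}.ncard = n) :
    ∑ᶠ x ∈ s, f (g x) = n • ∑ᶠ b ∈ g '' s, f b := by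
  have sum_fiber : ∀ a ∈ s, ∑ x ∈ hs.toFinset with g x = g a, f (g x) = n • f (g a) := by
    intro a ha
    have hcard : (hs.toFinset.filter fun x ↦ g x = g a).card = n := by
      rw [← hfiber a ha, ← Set.ncard_coe_finset, Finset.coe_filter]
      simp only [Set.Finite.mem_toFinset]
    rw [← hcard]
    exact Finset.sum_eq_card_nsmul fun x hx ↦ by rw [(Finset.mem_filter.mp hx).2]
  rw [finsum_mem_eq_finite_toFinset_sum _ hs, finsum_mem_eq_finite_toFinset_sum _ (hs.image g),
    hs.toFinset_image, Finset.smul_sum]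
  refine (Finset.sum_image' (fun x ↦ f (g x)) fun a ha ↦ ?_).symm
  exact (sum_fiber a (hs.mem_toFinset.mp ha)).symm

section FieldExtension

variable {k K : Type*} [Field k] [Field K] [Algebra k K]

theorem aeval_surjective_of_natDegree_minpoly_eq_finrank [FiniteDimensional k K] {x : K}
    (hx : (minpoly k x).natDegree = Module.finrank k K) :
    Function.Surjective (aeval x : k[X] →ₐ[k] K) := by
  rw [← AlgHom.range_eq_top, ← Algebra.adjoin_singleton_eq_range_aeval,
    ← IntermediateField.adjoin_simple_toSubalgebra_of_isAlgebraic
      (Algebra.IsAlgebraic.isAlgebraic x),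
    (Field.primitive_element_iff_minpoly_natDegree_eq k x).mpr hx,
    IntermediateField.top_toSubalgebra]

theorem isSquare_aeval_iff_exists_minpoly_dvd_sub_sq {A : Type*} [Ring A] [Algebra k A] {x : A}
    (hx : Function.Surjective (aeval x : k[X] →ₐ[k] A)) (F : k[X]) :
    IsSquare (aeval x F) ↔ ∃ G, minpoly k x ∣ F - G ^ 2 := by
  simp only [isSquare_iff_exists_sq, hx.exists, minpoly.dvd_iff, map_sub, map_pow, sub_eq_zero]

theorem quadCharFn_aeval_eq_chiP_minpoly {x : K}
    (hx : Function.Surjective (aeval x : k[X] →ₐ[k] K)) (F : k[X]) :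
    quadCharFn K (aeval x F) = chiP (minpoly k x) F := by
  simp only [quadCharFn, chiP, isSquare_aeval_iff_exists_minpoly_dvd_sub_sq hx, minpoly.dvd_iff]

theorem ncard_setOf_minpoly_eq [IsGalois k K] (x : K) :
    {y : K | minpoly k y = minpoly k x}.ncard = (minpoly k x).natDegree := by
  have conjugates_eq_rootSet : {y : K | minpoly k y = minpoly k x} = (minpoly k x).rootSet K := by
    ext y
    exact eq_comm.trans
      (isConjRoot_iff_mem_minpoly_rootSet (Algebra.IsIntegral.isIntegral x))
  rw [conjugates_eq_rootSet, ← Nat.card_coe_set_eq, Nat.card_eq_fintype_card]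
  exact card_rootSet_eq_natDegree (IsGalois.separable k x) (IsGalois.splits k x)

end FieldExtension

section FiniteField

variable {k K : Type*} [Field k] [Field K] [Finite K] [Algebra k K]

theorem exists_minpoly_eq_of_natDegree_dvd_finrank {P : k[X]} (hmonic : P.Monic)
    (hirr : Irreducible P) (hdvd : P.natDegree ∣ Module.finrank k K) :
    ∃ x : K, minpoly k x = P := by
  have : Fact (Irreducible P) := ⟨hirr⟩
  have finrank_adjoinRoot : Module.finrank k (AdjoinRoot P) = P.natDegree :=
    (AdjoinRoot.powerBasis hirr.ne_zero).finrank
  obtain ⟨φ⟩ : Nonempty (AdjoinRoot P →ₐ[k] K) :=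
    FiniteField.nonempty_algHom_of_finrank_dvd (finrank_adjoinRoot ▸ hdvd)
  refine ⟨φ (AdjoinRoot.root P), ?_⟩
  rw [minpoly.algHom_eq φ φ.injective, AdjoinRoot.minpoly_root hirr.ne_zero, hmonic.leadingCoeff,
    inv_one, C_1, mul_one]

theorem image_minpoly_setOf_natDegree_eq {d : ℕ} (hd : d ∣ Module.finrank k K) :
    minpoly k '' {x : K | (minpoly k x).natDegree = d} =
      {P : k[X] | P.Monic ∧ Irreducible P ∧ P.natDegree = d} := by
  ext P
  constructor
  · rintro ⟨x, hx, rfl⟩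
    have hint : IsIntegral k x := Algebra.IsIntegral.isIntegral x
    exact ⟨minpoly.monic hint, minpoly.irreducible hint, hx⟩
  · rintro ⟨hmonic, hirr, rfl⟩
    obtain ⟨x, rfl⟩ := exists_minpoly_eq_of_natDegree_dvd_finrank hmonic hirr hd
    exact ⟨x, rfl, rfl⟩

theorem finsum_mem_natDegree_minpoly_eq {M : Type*} [AddCommMonoid M] {d : ℕ}
    (hd : d ∣ Module.finrank k K) (f : k[X] → M) :
    ∑ᶠ x ∈ {x : K | (minpoly k x).natDegree = d}, f (minpoly k x) =
      d • ∑ᶠ P ∈ {P : k[X] | P.Monic ∧ Irreducible P ∧ P.natDegree = d}, f P := by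
  rw [← image_minpoly_setOf_natDegree_eq hd]
  refine finsum_mem_comp_eq_nsmul_finsum_mem_image (Set.toFinite _) _ f ?_
  rintro x rfl
  have conjugates_have_same_degree :
      {y ∈ {y : K | (minpoly k y).natDegree = (minpoly k x).natDegree} |
        minpoly k y = minpoly k x} = {y : K | minpoly k y = minpoly k x} :=
    Set.sep_eq_of_subset fun y hy ↦ congrArg natDegree hy
  rw [conjugates_have_same_degree, ncard_setOf_minpoly_eq]

theorem stmt5_general (F : k[X]) :
    ∑ᶠ x ∈ {x : K | (minpoly k x).natDegree = Module.finrank k K}, quadCharFn K (aeval x F) =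
      Module.finrank k K * ∑ᶠ P ∈ {P : k[X] | P.Monic ∧ Irreducible P ∧
        P.natDegree = Module.finrank k K}, chiP P F := by
  rw [← nsmul_eq_mul, ← finsum_mem_natDegree_minpoly_eq dvd_rfl]
  exact finsum_mem_congr rfl fun x hx ↦ quadCharFn_aeval_eq_chiP_minpoly
    (aeval_surjective_of_natDegree_minpoly_eq_finrank hx) F

end FiniteField

/-- the sum of `χ₂(F(x))` over the `x ∈ F_{q^n}` of degree exactly `n` over
`F_q` equals `n` times the sum of `χ_P(F)` over monic irreducible `P` of degree `n`. -/
theorem stmt5 (q : ℕ) (hq_odd : Odd q) (hq_pp : IsPrimePow q)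
    (n : ℕ) (hn : 0 < n)
    (Fq : Type) [Field Fq] [Fintype Fq] (hFq : Fintype.card Fq = q)
    (K : Type) [Field K] [Fintype K] [Algebra Fq K] (hK : Fintype.card K = q ^ n)
    (F : Fq[X]) :
    (∑ᶠ x ∈ {x : K | (minpoly Fq x).natDegree = n}, quadCharFn K (aeval x F)) =
      n * ∑ᶠ P ∈ {P : Fq[X] | P.Monic ∧ Irreducible P ∧ P.natDegree = n}, chiP P F := by
  obtain rfl : n = Module.finrank Fq K := Nat.pow_right_injective hq_pp.two_le <| by
    simpa only [hK, hFq] using Module.card_eq_pow_finrank (K := Fq) (V := K)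
  exact stmt5_general F
end

section
/- Let q be an odd prime power, let P ∈ F_q[X] be monic irreducible, and let k1, k2 ∈ {0, 1}. For d ≥ 0 define N_{k1,k2}(d; P) as the sum of χ_P(f1·f2) over all triples (f1, f2, f3) of monic polynomials in F_q[X] such that f1·f2·f3 is square-free of degree d, deg(f1·f3) ≡ k1 (mod 2), and deg(f2·f3) ≡ k2 (mod 2). Then there exist real constants C_even and C_odd (depending on P, k1, k2) such that for every ε > 0 there is a constant C_ε with |N_{k1,k2}(d; P) − (C_{parity(d)}/4)·q^d| ≤ C_ε · q^{(1/2 + ε)d} for all d ≥ 0, where C_{parity(d)} is C_even for d even and C_odd for d odd. -/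
open Polynomial Classical

noncomputable section

/-- `N_{k1,k2}(d;P)`: the sum of `χ_P(f1·f2)` over triples of monic polynomials with
`f1·f2·f3` square-free of degree `d`, `deg(f1·f3) ≡ k1 (mod 2)` and
`deg(f2·f3) ≡ k2 (mod 2)`. -/
def Nk {Fq : Type*} [Field Fq] (k1 k2 d : ℕ) (P : Fq[X]) : ℤ :=
  ∑ᶠ t ∈ {t : Fq[X] × Fq[X] × Fq[X] |
      t.1.Monic ∧ t.2.1.Monic ∧ t.2.2.Monic ∧
      Squarefree (t.1 * t.2.1 * t.2.2) ∧ (t.1 * t.2.1 * t.2.2).natDegree = d ∧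
      (t.1 * t.2.2).natDegree % 2 = k1 ∧ (t.2.1 * t.2.2).natDegree % 2 = k2},
    chiP P (t.1 * t.2.1)

end

/-! Expanding the two parity conditions in signs `a, b ∈ {±1}` writes `4 * Nk k1 k2 d P` as a
signed sum of the `d`-th coefficients of the series `F(X) = ∑ u₁(f₁) u₂(f₂) u₃(f₃) X ^ deg(f₁ f₂
f₃)` over square-free triples, where `u₁ = χ a ^ deg`, `u₂ = χ b ^ deg` and `u₃ = (ab) ^ deg`. It
has the Euler product `F = ∏_Q (1 + ∑ uᵢ(Q) X ^ deg Q)`. Dividing by the three `L`-series, whose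
Euler factors are `(1 - uᵢ(Q) X ^ deg Q)⁻¹`, cancels the linear terms, so the quotient converges
absolutely for `|X| < q ^ (-1/2)`. By orthogonality the `L`-series of `u₁` and `u₂` are
polynomials, while that of `u₃` is `1 / (1 - abqX)`. Hence `F = H / (1 - abqX)` with `H` absolutely
convergent on that disc, and the `d`-th coefficient of `F` is `H(ab / q) (abq) ^ d` up to an error
`O(q ^ ((1/2 + ε) d))`. The factor `(ab) ^ d` is what makes the constant depend on the parity of
`d`. -/

open Filter Topology Asymptotics
open scoped PowerSeries PowerSeries.WithPiTopology ENNReal NNReal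

section WeightedNorm

/-- The weighted `ℓ¹`-norm `∑ ‖aₙ‖ tⁿ` of a power series `∑ aₙ Xⁿ`, used to express absolute
convergence on the disc of radius `t`. It takes values in `ℝ≥0∞`, so that it is defined (and
submultiplicative) without any summability assumption. -/
noncomputable def weightedNorm {R : Type*} [NormedRing R] (t : ℝ≥0) (f : R⟦X⟧) : ℝ≥0∞ :=
  ∑' n, ‖PowerSeries.coeff n f‖ₑ * (t : ℝ≥0∞) ^ n

variable {R : Type*} [NormedRing R] (t : ℝ≥0)

lemma weightedNorm_monomial (n : ℕ) (a : R) :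
    weightedNorm t (PowerSeries.monomial n a) = ‖a‖ₑ * (t : ℝ≥0∞) ^ n := by
  rw [weightedNorm, tsum_eq_single n, PowerSeries.coeff_monomial_same]
  intro m hm
  rw [PowerSeries.coeff_monomial, if_neg hm, enorm_zero, zero_mul]

lemma weightedNorm_one [NormOneClass R] : weightedNorm t (1 : R⟦X⟧) = 1 := by
  simpa using weightedNorm_monomial t 0 (1 : R)

lemma weightedNorm_add_le (f g : R⟦X⟧) :
    weightedNorm t (f + g) ≤ weightedNorm t f + weightedNorm t g := by
  simp only [weightedNorm, ← ENNReal.tsum_add, ← add_mul, map_add]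
  gcongr
  exact enorm_add_le _ _

lemma weightedNorm_sub_le (f g : R⟦X⟧) :
    weightedNorm t (f - g) ≤ weightedNorm t f + weightedNorm t g := by
  simp only [weightedNorm, ← ENNReal.tsum_add, ← add_mul, map_sub]
  gcongr
  exact enorm_sub_le

lemma enorm_mul_le_mul_enorm (a b : R) : ‖a * b‖ₑ ≤ ‖a‖ₑ * ‖b‖ₑ := by
  simpa only [enorm_eq_nnnorm, ← ENNReal.coe_mul, ENNReal.coe_le_coe] using nnnorm_mul_le a b

lemma weightedNorm_mul_le (f g : R⟦X⟧) :
    weightedNorm t (f * g) ≤ weightedNorm t f * weightedNorm t g := by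
  calc weightedNorm t (f * g)
    _ ≤ ∑' n, ∑ p ∈ Finset.HasAntidiagonal.antidiagonal n,
          ‖PowerSeries.coeff p.1 f‖ₑ * (t : ℝ≥0∞) ^ p.1 *
            (‖PowerSeries.coeff p.2 g‖ₑ * (t : ℝ≥0∞) ^ p.2) := by
        refine ENNReal.tsum_le_tsum fun n => ?_
        rw [PowerSeries.coeff_mul]
        grw [enorm_sum_le, Finset.sum_mul]
        refine Finset.sum_le_sum fun p hp => ?_
        grw [enorm_mul_le_mul_enorm, ← Finset.HasAntidiagonal.mem_antidiagonal.1 hp, pow_add,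
          mul_mul_mul_comm]
    _ = ∑' p : ℕ × ℕ, ‖PowerSeries.coeff p.1 f‖ₑ * (t : ℝ≥0∞) ^ p.1 *
            (‖PowerSeries.coeff p.2 g‖ₑ * (t : ℝ≥0∞) ^ p.2) := by
        rw [← Finset.HasAntidiagonal.sigmaAntidiagonalEquivProd.tsum_eq, ENNReal.tsum_sigma']
        refine tsum_congr fun n => ?_
        rw [tsum_fintype]
        exact (Finset.sum_coe_sort (Finset.HasAntidiagonal.antidiagonal n) fun p =>
          ‖PowerSeries.coeff p.1 f‖ₑ * (t : ℝ≥0∞) ^ p.1 *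
            (‖PowerSeries.coeff p.2 g‖ₑ * (t : ℝ≥0∞) ^ p.2)).symm
    _ = weightedNorm t f * weightedNorm t g := by
        simp only [weightedNorm, ENNReal.tsum_prod', ENNReal.tsum_mul_left, ENNReal.tsum_mul_right]

lemma weightedNorm_sum_le {ι : Type*} (s : Finset ι) (f : ι → R⟦X⟧) :
    weightedNorm t (∑ i ∈ s, f i) ≤ ∑ i ∈ s, weightedNorm t (f i) :=
  Finset.le_sum_of_subadditive _ (by simp [weightedNorm]) (weightedNorm_add_le t) s f

lemma weightedNorm_prod_le {R ι : Type*} [NormedCommRing R] [NormOneClass R] (s : Finset ι)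
    (f : ι → R⟦X⟧) : weightedNorm t (∏ i ∈ s, f i) ≤ ∏ i ∈ s, weightedNorm t (f i) :=
  Finset.le_prod_of_submultiplicative _ (weightedNorm_one t).le (weightedNorm_mul_le t) s f

lemma weightedNorm_ne_top_of_coeff_eq_zero {f : R⟦X⟧} {N : ℕ}
    (hf : ∀ n, N ≤ n → PowerSeries.coeff n f = 0) : weightedNorm t f ≠ ∞ := by
  rw [weightedNorm, tsum_eq_sum (s := Finset.range N)
    fun n hn => by simp [hf n (by simpa using hn)]]
  exact ENNReal.sum_ne_top.2 fun n _ => by finiteness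

lemma weightedNorm_le_of_tendsto {α : Type*} {l : Filter α} [l.NeBot] {f : α → R⟦X⟧} {g : R⟦X⟧}
    {B : ℝ≥0∞} (hfg : Tendsto f l (𝓝 g)) (hf : ∀ a, weightedNorm t (f a) ≤ B) :
    weightedNorm t g ≤ B := by
  refine ENNReal.tsum_le_of_sum_range_le fun N => ?_
  have hcoeff (n : ℕ) : Tendsto (fun a => ‖PowerSeries.coeff n (f a)‖ₑ * (t : ℝ≥0∞) ^ n) l
      (𝓝 (‖PowerSeries.coeff n g‖ₑ * (t : ℝ≥0∞) ^ n)) :=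
    ENNReal.Tendsto.mul_const
      ((PowerSeries.WithPiTopology.tendsto_iff_coeff_tendsto _ _ _ _).1 hfg n).enorm
      (Or.inr (by finiteness))
  exact le_of_tendsto (tendsto_finsetSum _ fun n _ => hcoeff n)
    (Eventually.of_forall fun a => (ENNReal.sum_le_tsum _).trans (hf a))

lemma weightedNorm_ne_top_of_hasProd {R α : Type*} [NormedCommRing R] [NormOneClass R]
    {f : α → R⟦X⟧} {g : R⟦X⟧} (hfg : HasProd f g) {x : α → ℝ≥0∞} (hx : ∑' a, x a ≠ ∞)
    (hf : ∀ a, weightedNorm t (f a) ≤ 1 + x a) : weightedNorm t g ≠ ∞ := by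
  lift x to α → ℝ≥0 using ENNReal.ne_top_of_tsum_ne_top hx
  have hsum : Summable x := ENNReal.tsum_coe_ne_top_iff_summable.1 hx
  refine ((weightedNorm_le_of_tendsto t hfg fun s => ?_).trans_lt
    (ENNReal.ofReal_lt_top (r := Real.exp (∑' a, (x a : ℝ))))).ne
  calc weightedNorm t (∏ a ∈ s, f a)
    _ ≤ ∏ a ∈ s, (1 + x a : ℝ≥0∞) :=
        (weightedNorm_prod_le t s f).trans (Finset.prod_le_prod' fun a _ => hf a)
    _ = ENNReal.ofReal (∏ a ∈ s, (1 + x a : ℝ)) := by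
        rw [ENNReal.ofReal_prod_of_nonneg fun a _ => by positivity]
        refine Finset.prod_congr rfl fun a _ => ?_
        rw [ENNReal.ofReal_add zero_le_one (x a).coe_nonneg, ENNReal.ofReal_one,
          ENNReal.ofReal_coe_nnreal]
    _ ≤ ENNReal.ofReal (Real.exp (∑' a, (x a : ℝ))) := by
        refine ENNReal.ofReal_le_ofReal ?_
        calc ∏ a ∈ s, (1 + x a : ℝ)
          _ ≤ Real.exp (∑ a ∈ s, (x a : ℝ)) := Real.prod_one_add_le_exp_sum s fun a => (x a).2
          _ ≤ Real.exp (∑' a, (x a : ℝ)) := Real.exp_le_exp.2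
              ((NNReal.summable_coe.2 hsum).sum_le_tsum s fun a _ => (x a).2)

/-- With `f i` in the role of an Euler factor at a prime, the linear terms of
`(1 + ∑ f i) ∏ (1 - f i)` cancel, which leaves a quadratic error. -/
lemma weightedNorm_one_add_sum_mul_prod_le {R ι : Type*} [NormedCommRing R] [NormOneClass R]
    (s : Finset ι) {f : ι → R⟦X⟧} {τ : ℝ≥0∞} (hτ : τ ≤ 1) (hf : ∀ i, weightedNorm t (f i) ≤ τ) :
    weightedNorm t ((1 + ∑ i ∈ s, f i) * ∏ i ∈ s, (1 - f i)) ≤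
      1 + (∑ j ∈ Finset.range s.card, ((j + 1) * 2 ^ j : ℝ≥0∞)) * τ ^ 2 := by
  induction s using Finset.cons_induction with
  | empty => simp [weightedNorm_one]
  | cons a s ha ih =>
    have hsum : weightedNorm t (∑ i ∈ s, f i + f a) ≤ (s.card + 1) * τ := by
      grw [weightedNorm_add_le, weightedNorm_sum_le,
        Finset.sum_le_card_nsmul s _ τ fun i _ => hf i, hf a, nsmul_eq_mul, add_one_mul]
    have hprod : weightedNorm t (∏ i ∈ s, (1 - f i)) ≤ 2 ^ s.card := by
      refine (weightedNorm_prod_le t s _).trans (Finset.prod_le_pow_card s _ _ fun i _ => ?_)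
      grw [weightedNorm_sub_le, weightedNorm_one, hf i, hτ, one_add_one_eq_two]
    have hsplit : (1 + ∑ i ∈ s.cons a ha, f i) * ∏ i ∈ s.cons a ha, (1 - f i) =
        (1 + ∑ i ∈ s, f i) * ∏ i ∈ s, (1 - f i) -
          (∑ i ∈ s, f i + f a) * f a * ∏ i ∈ s, (1 - f i) := by
      rw [Finset.sum_cons, Finset.prod_cons]
      ring
    rw [hsplit]
    grw [weightedNorm_sub_le, ih, weightedNorm_mul_le, weightedNorm_mul_le, hsum, hf a, hprod]
    rw [Finset.card_cons, Finset.sum_range_succ]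
    exact le_of_eq (by ring)

lemma weightedNorm_ne_top_iff_summable {f : R⟦X⟧} :
    weightedNorm t f ≠ ∞ ↔ Summable fun n => ‖PowerSeries.coeff n f‖ * (t : ℝ) ^ n := by
  rw [show (fun n => ‖PowerSeries.coeff n f‖ * (t : ℝ) ^ n) =
      fun n => ((‖PowerSeries.coeff n f‖₊ * t ^ n : ℝ≥0) : ℝ) by simp,
    NNReal.summable_coe, ← ENNReal.tsum_coe_ne_top_iff_summable]
  simp [weightedNorm, enorm_eq_nnnorm]

end WeightedNorm

section GeometricConvolution

variable {𝕜 : Type*} [NormedField 𝕜] {r : 𝕜} {H : 𝕜⟦X⟧}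

lemma coeff_mul_geometric_sub_tsum (hr : r ≠ 0)
    (hH : Summable fun j => PowerSeries.coeff j H * r⁻¹ ^ j) (d : ℕ) :
    PowerSeries.coeff d (H * PowerSeries.mk (r ^ ·)) -
      (∑' j, PowerSeries.coeff j H * r⁻¹ ^ j) * r ^ d =
        -∑' j, PowerSeries.coeff (j + (d + 1)) H * r⁻¹ ^ (j + 1) := by
  have hhead : PowerSeries.coeff d (H * PowerSeries.mk (r ^ ·)) =
      (∑ j ∈ Finset.range (d + 1), PowerSeries.coeff j H * r⁻¹ ^ j) * r ^ d := by
    rw [PowerSeries.coeff_mul, Finset.Nat.sum_antidiagonal_eq_sum_range_succ_mk, Finset.sum_mul]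
    refine Finset.sum_congr rfl fun j hj => ?_
    rw [PowerSeries.coeff_mk, mul_assoc, inv_pow, pow_sub₀ r hr (Finset.mem_range_succ_iff.1 hj),
      mul_comm (r ^ d)]
  rw [hhead, ← hH.sum_add_tsum_nat_add (d + 1), add_mul, sub_add_cancel_left, ← tsum_mul_right]
  congr 2 with j
  rw [← add_assoc, add_right_comm, pow_add _ _ d, mul_assoc, mul_assoc, ← mul_pow,
    inv_mul_cancel₀ hr, one_pow, mul_one]

lemma coeff_mul_geometric_sub_isBigO [CompleteSpace 𝕜] {t : ℝ≥0} (hr : r ≠ 0) (hrt : ‖r‖⁻¹ ≤ t)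
    (hH : weightedNorm t H ≠ ∞) :
    (fun d => PowerSeries.coeff d (H * PowerSeries.mk (r ^ ·)) -
      (∑' j, PowerSeries.coeff j H * r⁻¹ ^ j) * r ^ d) =O[⊤] fun d => (t : ℝ)⁻¹ ^ d := by
  have ht : 0 < (t : ℝ) := (inv_pos.2 (norm_pos_iff.2 hr)).trans_le hrt
  have hsum : Summable fun n => ‖PowerSeries.coeff n H‖ * (t : ℝ) ^ n :=
    (weightedNorm_ne_top_iff_summable t).1 hH
  have hsum_r : Summable fun j => PowerSeries.coeff j H * r⁻¹ ^ j := by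
    refine Summable.of_norm_bounded hsum fun j => ?_
    rw [norm_mul, norm_pow, norm_inv]
    gcongr
  refine isBigO_top.2 ⟨∑' n, ‖PowerSeries.coeff n H‖ * (t : ℝ) ^ n, fun d => ?_⟩
  have hsum_shift := (summable_nat_add_iff (d + 1)).2 hsum
  rw [coeff_mul_geometric_sub_tsum hr hsum_r, norm_neg, norm_pow, norm_inv,
    Real.norm_of_nonneg ht.le]
  calc ‖∑' j, PowerSeries.coeff (j + (d + 1)) H * r⁻¹ ^ (j + 1)‖
    _ ≤ ∑' j, ‖PowerSeries.coeff (j + (d + 1)) H‖ * (t : ℝ) ^ (j + (d + 1)) * (t : ℝ)⁻¹ ^ d := by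
        refine tsum_of_norm_bounded (hsum_shift.mul_right _).hasSum fun j => ?_
        rw [norm_mul, norm_pow, norm_inv, mul_assoc, ← add_assoc, add_right_comm, pow_add _ _ d,
          mul_assoc, ← mul_pow, mul_inv_cancel₀ ht.ne', one_pow, mul_one]
        gcongr
    _ ≤ (∑' n, ‖PowerSeries.coeff n H‖ * (t : ℝ) ^ n) * (t : ℝ)⁻¹ ^ d := by
        rw [tsum_mul_right]
        refine mul_le_mul_of_nonneg_right ?_ (by positivity)
        rw [← hsum.sum_add_tsum_nat_add (d + 1)]
        exact le_add_of_nonneg_left (by positivity)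

end GeometricConvolution

section TsumLimits

lemma tendsto_tsum_of_eventually_mem_iff {α β G : Type*} [AddCommGroup G] [UniformSpace G]
    [IsUniformAddGroup G] [CompleteSpace G] [T2Space G] {g : α → G} (hg : Summable g)
    {l : Filter β} {A : β → Set α} {B : Set α} (hAB : ∀ x, ∀ᶠ b in l, x ∈ A b ↔ x ∈ B) :
    Tendsto (fun b => ∑' x : A b, g x) l (𝓝 (∑' x : B, g x)) := by
  rw [← tendsto_sub_nhds_zero_iff]
  intro e he
  obtain ⟨v, hv, hve⟩ := exists_nhds_half_neg he
  obtain ⟨s, hs⟩ := hg.tsum_vanishing hv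
  rw [Filter.mem_map]
  filter_upwards [(Filter.eventually_all_finset s).2 fun x _ => hAB x] with b hb
  have tsum_inter_add_tsum_diff (C D : Set α) :
      ∑' x : C, g x = ∑' x : (C ∩ D : Set α), g x + ∑' x : (C \ D : Set α), g x := by
    rw [← Summable.tsum_union_disjoint Set.disjoint_sdiff_inter.symm (hg.subtype _) (hg.subtype _),
      Set.inter_union_sdiff]
  have hdiff : ∑' x : A b, g x - ∑' x : B, g x =
      ∑' x : (A b \ B : Set α), g x - ∑' x : (B \ A b : Set α), g x := by
    rw [tsum_inter_add_tsum_diff (A b) B, tsum_inter_add_tsum_diff B (A b), Set.inter_comm B,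
      add_sub_add_left_eq_sub]
  rw [Set.mem_preimage, hdiff]
  refine hve _ (hs _ ?_) _ (hs _ ?_) <;> rw [Set.disjoint_left]
  · exact fun x hx hxs => hx.2 ((hb x hxs).1 hx.1)
  · exact fun x hx hxs => hx.2 ((hb x hxs).2 hx.1)

end TsumLimits

section EulerProduct

/-- The multiplicative monoid of monic polynomials, which plays the role of the positive integers
in the arithmetic of `K[X]`. -/
def monicSubmonoid (K : Type*) [Semiring K] : Submonoid K[X] where
  carrier := {f | f.Monic}
  mul_mem' := Monic.mul
  one_mem' := monic_one

/-- The monic irreducible polynomials, over which Euler products are taken. -/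
abbrev MonicIrreducible (K : Type*) [Semiring K] : Type _ :=
  {Q : monicSubmonoid K // Irreducible (Q : K[X])}

instance {K : Type*} [Ring K] : IsLeftCancelMul (monicSubmonoid K) where
  mul_left_cancel f _ _ h := Subtype.ext (f.2.isRegular.left (congrArg Subtype.val h))

variable {K : Type*} [Field K]

lemma exists_eq_mul_of_dvd {f Q : monicSubmonoid K} (h : (Q : K[X]) ∣ f) :
    ∃ g : monicSubmonoid K, f = Q * g := by
  obtain ⟨g, hg⟩ := h
  exact ⟨⟨g, Q.2.of_mul_monic_left (hg ▸ f.2)⟩, Subtype.ext hg⟩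

lemma monicIrreducible_dvd_iff_eq {Q Q' : MonicIrreducible K} :
    (Q : K[X]) ∣ (Q' : K[X]) ↔ Q = Q' := by
  refine ⟨fun h => ?_, fun h => h ▸ dvd_rfl⟩
  exact Subtype.ext (Subtype.ext (eq_of_monic_of_associated Q.1.2 Q'.1.2
    (Q.2.associated_of_dvd Q'.2 h)))

lemma exists_monicIrreducible_dvd {f : monicSubmonoid K} (hf : f ≠ 1) :
    ∃ Q : MonicIrreducible K, (Q : K[X]) ∣ f := by
  have hunit : ¬IsUnit (f : K[X]) := fun h => hf (Subtype.ext (f.2.eq_one_of_isUnit h))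
  obtain ⟨Q, hQ, hirr, hdvd⟩ := exists_monic_irreducible_factor _ hunit
  exact ⟨⟨⟨Q, hQ⟩, hirr⟩, hdvd⟩

lemma finite_setOf_monicIrreducible_dvd (f : monicSubmonoid K) :
    {Q : MonicIrreducible K | (Q : K[X]) ∣ f}.Finite := by
  have hinj : Function.Injective fun Q : MonicIrreducible K => (Q : K[X]) :=
    Subtype.val_injective.comp Subtype.val_injective
  refine ((Multiset.finite_toSet (UniqueFactorizationMonoid.normalizedFactors (f : K[X]))).preimage
    hinj.injOn).subset fun Q hQ => ?_
  exact (Polynomial.mem_normalizedFactors_iff f.2.ne_zero).2 ⟨Q.2, Q.1.2, hQ⟩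

variable {R : Type*} [CommRing R] [UniformSpace R] [IsUniformAddGroup R] [IsTopologicalRing R]
  [CompleteSpace R] [T2Space R]

lemma tsum_image_mul_left {M : Type*} [Monoid M] [IsLeftCancelMul M] {m : M →* R}
    (hm : Summable m) (a : M) (T : Set M) :
    ∑' x : (a * ·) '' T, m x = m a * ∑' x : T, m x := by
  rw [tsum_image _ (mul_right_injective a).injOn]
  simp only [map_mul]
  exact (hm.subtype T).tsum_mul_left (m a)

/-- The monic polynomials that survive sieving by the primes in `S`. -/
def coprimeTo (S : Finset (MonicIrreducible K)) : Set (monicSubmonoid K) :=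
  {f | ∀ Q ∈ S, ¬(Q : K[X]) ∣ f}

lemma coprimeTo_eq_union {Q : MonicIrreducible K} {S : Finset (MonicIrreducible K)} (hQ : Q ∉ S) :
    coprimeTo S = coprimeTo (insert Q S) ∪ ((Q : monicSubmonoid K) * ·) '' coprimeTo S := by
  ext f
  constructor
  · intro hf
    by_cases hQf : (Q : K[X]) ∣ f
    · obtain ⟨g, rfl⟩ := exists_eq_mul_of_dvd hQf
      exact Or.inr ⟨g, fun Q' hQ' h => hf Q' hQ' (dvd_mul_of_dvd_right h _), rfl⟩
    · exact Or.inl fun Q' hQ' => (Finset.mem_insert.1 hQ').elim (fun h => h ▸ hQf) (hf Q')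
  · rintro (hf | ⟨g, hg, rfl⟩) Q' hQ' h
    · exact hf Q' (Finset.mem_insert_of_mem hQ') h
    · rcases Q'.2.prime.dvd_or_dvd h with h | h
      · exact hQ (monicIrreducible_dvd_iff_eq.1 h ▸ hQ')
      · exact hg Q' hQ' h

lemma prod_one_sub_mul_tsum {m : monicSubmonoid K →* R} (hm : Summable m)
    (S : Finset (MonicIrreducible K)) :
    (∏ Q ∈ S, (1 - m Q)) * ∑' f, m f = ∑' f : coprimeTo S, m f := by
  induction S using Finset.induction_on with
  | empty =>
    have : coprimeTo (∅ : Finset (MonicIrreducible K)) = Set.univ := by simp [coprimeTo]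
    rw [this, Finset.prod_empty, one_mul, tsum_univ]
  | insert Q S hQ ih =>
    have hdisj : Disjoint (coprimeTo (insert Q S))
        (((Q : monicSubmonoid K) * ·) '' coprimeTo S) := by
      rw [Set.disjoint_right]
      rintro _ ⟨g, -, rfl⟩ h
      exact h Q (Finset.mem_insert_self Q S) (dvd_mul_right _ _)
    have hsplit : ∑' f : coprimeTo S, m f =
        ∑' f : coprimeTo (insert Q S), m f + m Q * ∑' f : coprimeTo S, m f := by
      conv_lhs => rw [coprimeTo_eq_union hQ]
      rw [Summable.tsum_union_disjoint hdisj (hm.subtype _) (hm.subtype _),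
        tsum_image_mul_left hm]
    rw [Finset.prod_insert hQ, mul_assoc, ih, sub_mul, one_mul, sub_eq_iff_eq_add]
    exact hsplit

lemma eventually_mem_coprimeTo_iff (f : monicSubmonoid K) :
    ∀ᶠ S in atTop, f ∈ coprimeTo S ↔ f ∈ ({1} : Set (monicSubmonoid K)) := by
  rw [Set.mem_singleton_iff]
  by_cases hf : f = 1
  · refine .of_forall fun S => iff_of_true (fun Q _ h => Q.2.not_isUnit (isUnit_of_dvd_one ?_)) hf
    rwa [hf] at h
  · obtain ⟨Q, hQ⟩ := exists_monicIrreducible_dvd hf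
    filter_upwards [eventually_ge_atTop {Q}] with S hS
    exact iff_of_false (fun h => h Q (Finset.singleton_subset_iff.1 hS) hQ) hf

lemma hasProd_one_sub {m : monicSubmonoid K →* R} (hm : Summable m) {L' : R}
    (hL' : (∑' f, m f) * L' = 1) : HasProd (fun Q : MonicIrreducible K => 1 - m Q) L' := by
  have hlim : Tendsto (fun S : Finset (MonicIrreducible K) => (∑' f : coprimeTo S, m f) * L') atTop
      (𝓝 ((∑' f : ({1} : Set (monicSubmonoid K)), m f) * L')) :=
    (tendsto_tsum_of_eventually_mem_iff hm eventually_mem_coprimeTo_iff).mul_const _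
  rw [tsum_singleton 1 m, map_one, one_mul] at hlim
  refine hlim.congr fun S => ?_
  rw [← prod_one_sub_mul_tsum hm, mul_assoc, hL', mul_one]

variable {ι : Type*} [Fintype ι]

/-- The tuples of monic polynomials with square-free product, i.e. the tuples of pairwise coprime
square-free monic polynomials. -/
def squarefreeTuples (K ι : Type*) [Field K] [Fintype ι] : Set (ι → monicSubmonoid K) :=
  {f | Squarefree ((∏ i, f i : monicSubmonoid K) : K[X])}

/-- The tuples in `squarefreeTuples` all of whose prime divisors belong to `S`; their sum is the
partial Euler product over `S`. -/
def squarefreeTuplesOver (ι : Type*) [Fintype ι] (S : Finset (MonicIrreducible K)) :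
    Set (ι → monicSubmonoid K) :=
  {f ∈ squarefreeTuples K ι |
    ∀ Q : MonicIrreducible K, (Q : K[X]) ∣ ((∏ i, f i : monicSubmonoid K) : K[X]) → Q ∈ S}

/-- The tuple with `Q` in position `i` and `1` elsewhere if `o = some i`, and the tuple `1` if
`o = none`: the possible contributions of a prime `Q` to a tuple in `squarefreeTuples`. -/
noncomputable def primeAt (Q : monicSubmonoid K) (o : Option ι) : ι → monicSubmonoid K :=
  o.elim 1 fun i => Pi.mulSingle i Q

lemma prod_primeAt_some_mul (Q : monicSubmonoid K) (i : ι) (f : ι → monicSubmonoid K) :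
    ∏ j, (primeAt Q (some i) * f) j = Q * ∏ j, f j := by
  simp only [primeAt, Option.elim_some, Pi.mul_apply, Finset.prod_mul_distrib]
  rw [Finset.prod_pi_mulSingle' i Q, if_pos (Finset.mem_univ i)]

lemma primeAt_mul_mem_squarefreeTuplesOver_insert {Q : MonicIrreducible K}
    {S : Finset (MonicIrreducible K)} (hQ : Q ∉ S) {f : ι → monicSubmonoid K}
    (hf : f ∈ squarefreeTuplesOver ι S) (o : Option ι) :
    primeAt (Q : monicSubmonoid K) o * f ∈ squarefreeTuplesOver ι (insert Q S) := by
  rcases o with _ | i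
  · rw [primeAt, Option.elim_none, one_mul]
    exact ⟨hf.1, fun Q' hQ' => Finset.mem_insert_of_mem (hf.2 Q' hQ')⟩
  · simp only [squarefreeTuplesOver, squarefreeTuples, Set.mem_ofPred_eq, prod_primeAt_some_mul,
      Submonoid.coe_mul]
    refine ⟨squarefree_mul_iff.2 ⟨?_, Q.2.squarefree, hf.1⟩, fun Q' hQ' => ?_⟩
    · exact Q.2.isRelPrime_iff_not_dvd.2 fun h => hQ (hf.2 Q h)
    · rcases Q'.2.prime.dvd_or_dvd hQ' with h | h
      · exact monicIrreducible_dvd_iff_eq.1 h ▸ Finset.mem_insert_self _ _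
      · exact Finset.mem_insert_of_mem (hf.2 Q' h)

lemma exists_eq_primeAt_mul {Q : MonicIrreducible K} {S : Finset (MonicIrreducible K)}
    {f : ι → monicSubmonoid K} (hf : f ∈ squarefreeTuplesOver ι (insert Q S)) :
    ∃ (o : Option ι), ∃ g ∈ squarefreeTuplesOver ι S, primeAt (Q : monicSubmonoid K) o * g = f := by
  by_cases hQf : (Q : K[X]) ∣ ((∏ i, f i : monicSubmonoid K) : K[X])
  · rw [Submonoid.coe_finsetProd] at hQf
    obtain ⟨i, -, hi⟩ := Q.2.prime.exists_mem_finset_dvd hQf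
    obtain ⟨h, hfi⟩ := exists_eq_mul_of_dvd hi
    have hfg : primeAt (Q : monicSubmonoid K) (some i) * Function.update f i h = f := by
      ext1 j
      obtain rfl | hj := eq_or_ne j i
      · simp [primeAt, hfi]
      · simp [primeAt, hj]
    refine ⟨some i, Function.update f i h, ?_, hfg⟩
    rw [← hfg] at hf
    simp only [squarefreeTuplesOver, squarefreeTuples, Set.mem_ofPred_eq, prod_primeAt_some_mul,
      Submonoid.coe_mul, squarefree_mul_iff] at hf
    refine ⟨hf.1.2.2, fun Q' hQ' => ?_⟩
    refine Finset.mem_of_mem_insert_of_ne (hf.2 Q' (dvd_mul_of_dvd_right hQ' _)) ?_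
    rintro rfl
    exact Q'.2.isRelPrime_iff_not_dvd.1 hf.1.1 hQ'
  · refine ⟨none, f, ⟨hf.1, fun Q' hQ' => ?_⟩, one_mul f⟩
    exact Finset.mem_of_mem_insert_of_ne (hf.2 Q' hQ') fun h => hQf (h ▸ hQ')

lemma dvd_prod_of_dvd_apply {Q : K[X]} {f : ι → monicSubmonoid K} {i : ι} (h : Q ∣ f i) :
    Q ∣ ((∏ j, f j : monicSubmonoid K) : K[X]) := by
  rw [Submonoid.coe_finsetProd]
  exact h.trans (Finset.dvd_prod_of_mem _ (Finset.mem_univ i))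

lemma squarefreeTuplesOver_empty :
    squarefreeTuplesOver ι (∅ : Finset (MonicIrreducible K)) = {1} := by
  refine Set.eq_singleton_iff_unique_mem.2 ⟨⟨?_, fun Q hQ => ?_⟩, fun f hf => funext fun i => ?_⟩
  · simp [squarefreeTuples]
  · exact absurd (isUnit_of_dvd_one (by simpa using hQ)) Q.2.not_isUnit
  · by_contra hfi
    obtain ⟨Q, hQ⟩ := exists_monicIrreducible_dvd hfi
    exact Finset.notMem_empty Q (hf.2 Q (dvd_prod_of_dvd_apply hQ))

lemma dvd_primeAt_mul_apply_iff {Q : MonicIrreducible K} {S : Finset (MonicIrreducible K)}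
    (hQ : Q ∉ S) {f : ι → monicSubmonoid K} (hf : f ∈ squarefreeTuplesOver ι S) (o : Option ι)
    (i : ι) : (Q : K[X]) ∣ ((primeAt (Q : monicSubmonoid K) o * f) i : K[X]) ↔ o = some i := by
  have hndvd : ¬(Q : K[X]) ∣ f i := fun h => hQ (hf.2 Q (dvd_prod_of_dvd_apply h))
  rcases o with _ | j
  · simpa [primeAt] using hndvd
  · obtain rfl | hij := eq_or_ne i j
    · simp [primeAt]
    · simpa [primeAt, hij, hij.symm] using hndvd

lemma prod_one_add_sum_mulSingle {W : (ι → monicSubmonoid K) →* R} (hW : Summable W)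
    (S : Finset (MonicIrreducible K)) :
    ∏ Q ∈ S, (1 + ∑ i, W (Pi.mulSingle i Q)) = ∑' f : squarefreeTuplesOver ι S, W f := by
  induction S using Finset.induction_on with
  | empty => rw [squarefreeTuplesOver_empty, tsum_singleton 1 W, map_one, Finset.prod_empty]
  | insert Q S hQ ih =>
    have hunion : squarefreeTuplesOver ι (insert Q S) = ⋃ o ∈ (Finset.univ : Finset (Option ι)),
        (primeAt (Q : monicSubmonoid K) o * ·) '' squarefreeTuplesOver ι S := by
      ext f
      simp only [Finset.mem_univ, Set.iUnion_true, Set.mem_iUnion, Set.mem_image]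
      refine ⟨exists_eq_primeAt_mul, ?_⟩
      rintro ⟨o, g, hg, rfl⟩
      exact primeAt_mul_mem_squarefreeTuplesOver_insert hQ hg o
    have hdisj : ((Finset.univ : Finset (Option ι)) : Set (Option ι)).PairwiseDisjoint fun o =>
        (primeAt (Q : monicSubmonoid K) o * ·) '' squarefreeTuplesOver ι S := by
      intro o _ o' _ hne
      refine Set.disjoint_left.2 ?_
      rintro _ ⟨g, hg, rfl⟩ ⟨g', hg', h⟩
      refine hne (Option.ext fun i => ?_)
      rw [← dvd_primeAt_mul_apply_iff hQ hg, ← dvd_primeAt_mul_apply_iff hQ hg']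
      exact iff_of_eq (congrArg (fun f : ι → monicSubmonoid K => (Q : K[X]) ∣ f i) h.symm)
    rw [hunion, Summable.tsum_finset_bUnion_disjoint hdisj fun o _ => hW.subtype _,
      Finset.prod_insert hQ, ih, Fintype.sum_option, add_mul, Finset.sum_mul]
    simp only [tsum_image_mul_left hW, primeAt, Option.elim_none, Option.elim_some, map_one]

lemma eventually_mem_squarefreeTuplesOver_iff (f : ι → monicSubmonoid K) :
    ∀ᶠ S in atTop, f ∈ squarefreeTuplesOver ι S ↔ f ∈ squarefreeTuples K ι := by
  filter_upwards [eventually_ge_atTop (finite_setOf_monicIrreducible_dvd (∏ i, f i)).toFinset]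
    with S hS
  exact and_iff_left fun Q hQ => hS ((Set.Finite.mem_toFinset _).2 hQ)

lemma hasProd_one_add_sum_mulSingle {W : (ι → monicSubmonoid K) →* R} (hW : Summable W) :
    HasProd (fun Q : MonicIrreducible K => 1 + ∑ i, W (Pi.mulSingle i Q))
      (∑' f : squarefreeTuples K ι, W f) :=
  (tendsto_tsum_of_eventually_mem_iff hW eventually_mem_squarefreeTuplesOver_iff).congr
    fun S => (prod_one_add_sum_mulSingle hW S).symm

end EulerProduct

section GradedSeries

variable {M 𝕜 : Type*} [Monoid M] [Semiring 𝕜]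

/-- The homomorphism `x ↦ u(x) X ^ deg(x)`, whose sum is the generating series of `u` with respect
to the degree `deg`. -/
noncomputable def gradedMonomial (deg : M →* Multiplicative ℕ) (u : M →* 𝕜) : M →* 𝕜⟦X⟧ where
  toFun x := PowerSeries.monomial (deg x).toAdd (u x)
  map_one' := by simp
  map_mul' x y := by
    rw [map_mul deg, map_mul u, toAdd_mul, PowerSeries.monomial_mul_monomial]

lemma coeff_gradedMonomial (deg : M →* Multiplicative ℕ) (u : M →* 𝕜) (n : ℕ) (x : M) :
    PowerSeries.coeff n (gradedMonomial deg u x) = if (deg x).toAdd = n then u x else 0 := by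
  simp only [gradedMonomial, MonoidHom.coe_mk, OneHom.coe_mk, PowerSeries.coeff_monomial, eq_comm]

lemma finite_support_coeff_gradedMonomial {deg : M →* Multiplicative ℕ}
    (hdeg : ∀ n, {x | (deg x).toAdd = n}.Finite) (u : M →* 𝕜) (n : ℕ) :
    (Function.support fun x => PowerSeries.coeff n (gradedMonomial deg u x)).Finite := by
  refine (hdeg n).subset fun x hx => ?_
  rw [Function.mem_support, coeff_gradedMonomial] at hx
  exact (ite_ne_right_iff.1 hx).1

variable [TopologicalSpace 𝕜]

lemma summable_of_finite_support_coeff {α : Type*} {f : α → 𝕜⟦X⟧}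
    (hf : ∀ n, (Function.support fun a => PowerSeries.coeff n (f a)).Finite) : Summable f :=
  (PowerSeries.WithPiTopology.summable_iff_summable_coeff _).2 fun n =>
    summable_of_hasFiniteSupport (hf n)

lemma summable_gradedMonomial {deg : M →* Multiplicative ℕ}
    (hdeg : ∀ n, {x | (deg x).toAdd = n}.Finite) (u : M →* 𝕜) : Summable (gradedMonomial deg u) :=
  summable_of_finite_support_coeff (finite_support_coeff_gradedMonomial hdeg u)

lemma coeff_tsum_eq_finsum [T2Space 𝕜] {α : Type*} {f : α → 𝕜⟦X⟧}
    (hf : ∀ n, (Function.support fun a => PowerSeries.coeff n (f a)).Finite) (n : ℕ) :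
    PowerSeries.coeff n (∑' a, f a) = ∑ᶠ a, PowerSeries.coeff n (f a) := by
  rw [← tsum_eq_finsum (L := .unconditional α) (hf n)]
  exact ((PowerSeries.WithPiTopology.hasSum_iff_hasSum_coeff _).1
    (summable_of_finite_support_coeff hf).hasSum n).tsum_eq.symm

lemma coeff_tsum_gradedMonomial [T2Space 𝕜] {deg : M →* Multiplicative ℕ}
    (hdeg : ∀ n, {x | (deg x).toAdd = n}.Finite) (u : M →* 𝕜) (T : Set M) (n : ℕ) :
    PowerSeries.coeff n (∑' x : T, gradedMonomial deg u x) =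
      ∑ᶠ x ∈ {x ∈ T | (deg x).toAdd = n}, u x := by
  rw [coeff_tsum_eq_finsum fun n =>
    (finite_support_coeff_gradedMonomial hdeg u n).preimage Subtype.val_injective.injOn]
  rw [finsum_set_coe_eq_finsum_mem T (f := fun x => PowerSeries.coeff n (gradedMonomial deg u x))]
  refine finsum_congr fun x => ?_
  rw [coeff_gradedMonomial]
  by_cases hx : x ∈ T <;> by_cases hn : (deg x).toAdd = n <;> simp [hx, hn]

/-- The homomorphism `x ↦ ∏ i, u i (x i)` on tuples. -/
def tupleHom {ι M N : Type*} [Fintype ι] [Monoid M] [CommMonoid N] (u : ι → M →* N) :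
    (ι → M) →* N :=
  ∏ i, (u i).comp (Pi.evalMonoidHom _ i)

lemma tupleHom_apply {ι M N : Type*} [Fintype ι] [Monoid M] [CommMonoid N] (u : ι → M →* N)
    (x : ι → M) : tupleHom u x = ∏ i, u i (x i) := by
  simp [tupleHom]

lemma tupleHom_mulSingle {ι M N : Type*} [Fintype ι] [Monoid M] [CommMonoid N] (u : ι → M →* N)
    (i : ι) (x : M) : tupleHom u (Pi.mulSingle i x) = u i x := by
  rw [tupleHom_apply, Finset.prod_eq_single i, Pi.mulSingle_eq_same]
  · intro j _ hj
    rw [Pi.mulSingle_eq_of_ne hj, map_one]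
  · exact fun h => absurd (Finset.mem_univ i) h

end GradedSeries

section MonicDegree

variable {K : Type*} [Field K]

/-- The degree as a homomorphism on the monoid of monic polynomials. -/
noncomputable def monicDegree : monicSubmonoid K →* Multiplicative ℕ where
  toFun f := Multiplicative.ofAdd (f : K[X]).natDegree
  map_one' := by simp
  map_mul' f g := by rw [Submonoid.coe_mul, f.2.natDegree_mul g.2, ofAdd_add]

lemma toAdd_monicDegree (f : monicSubmonoid K) :
    (monicDegree f).toAdd = (f : K[X]).natDegree := rfl

lemma toAdd_monicDegree_eq_zero_iff {f : monicSubmonoid K} :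
    (monicDegree f).toAdd = 0 ↔ f = 1 := by
  rw [toAdd_monicDegree, f.2.natDegree_eq_zero, OneMemClass.coe_eq_one]

/-- Monic polynomials of degree `n` are determined by their lower coefficients. -/
noncomputable def monicOfDegreeEquiv (n : ℕ) :
    {f : monicSubmonoid K | (monicDegree f).toAdd = n} ≃ (Fin n → K) :=
  (Equiv.subtypeSubtypeEquivSubtypeInter (fun f : K[X] => f.Monic) fun f => f.natDegree = n).trans
    ((monicEquivDegreeLT n).trans (degreeLTEquiv K n).toEquiv)

lemma ncard_monicDegree_eq (n : ℕ) :
    {f : monicSubmonoid K | (monicDegree f).toAdd = n}.ncard = Nat.card K ^ n := by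
  rw [← Nat.card_coe_set_eq, Nat.card_congr (monicOfDegreeEquiv n), Nat.card_fun, Nat.card_fin]

variable [Finite K]

lemma finite_monicDegree_eq (n : ℕ) :
    {f : monicSubmonoid K | (monicDegree f).toAdd = n}.Finite :=
  Set.finite_coe_iff.1 (Finite.of_equiv _ (monicOfDegreeEquiv n).symm)

lemma finite_tupleHom_monicDegree_eq {ι : Type*} [Fintype ι] (n : ℕ) :
    {f : ι → monicSubmonoid K | (tupleHom (fun _ => monicDegree) f).toAdd = n}.Finite := by
  have hle : {f : monicSubmonoid K | (monicDegree f).toAdd ≤ n}.Finite := by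
    refine ((Set.finite_Iic n).biUnion fun k _ => finite_monicDegree_eq (K := K) k).subset
      fun f hf => ?_
    exact Set.mem_biUnion (Set.mem_Iic.2 hf) rfl
  refine (Set.Finite.pi' fun _ : ι => hle).subset fun f hf i => ?_
  rw [Set.mem_ofPred_eq, tupleHom_apply, toAdd_prod] at hf
  exact hf ▸ Finset.single_le_sum (f := fun i => (monicDegree (f i)).toAdd)
    (fun j _ => Nat.zero_le _) (Finset.mem_univ i)

lemma tsum_monicIrreducible_pow_ne_top {s : ℝ≥0} (hs : Nat.card K * s < 1) :
    ∑' Q : MonicIrreducible K, (s : ℝ≥0∞) ^ (monicDegree Q.1).toAdd ≠ ∞ := by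
  refine ((ENNReal.tsum_comp_le_tsum_of_injective Subtype.val_injective
    fun f : monicSubmonoid K => (s : ℝ≥0∞) ^ (monicDegree f).toAdd).trans_lt ?_).ne
  calc ∑' f : monicSubmonoid K, (s : ℝ≥0∞) ^ (monicDegree f).toAdd
    _ = ∑' n, ((Nat.card K * s : ℝ≥0) : ℝ≥0∞) ^ n := by
        rw [← ENNReal.tsum_fiberwise _ fun f => (monicDegree f).toAdd]
        refine tsum_congr fun n => ?_
        have hfiber : (fun f : monicSubmonoid K => (monicDegree f).toAdd) ⁻¹' {n} =
            {f | (monicDegree f).toAdd = n} := rfl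
        rw [tsum_congr fun f => congrArg ((s : ℝ≥0∞) ^ ·) f.2, ENNReal.tsum_set_const, hfiber,
          ← (finite_monicDegree_eq n).cast_ncard_eq, ncard_monicDegree_eq]
        push_cast
        rw [mul_pow]
    _ < ∞ := by
        rw [ENNReal.tsum_geometric, ENNReal.inv_lt_top, tsub_pos_iff_lt]
        exact_mod_cast hs

end MonicDegree

section SquarefreeTuples

variable {K 𝕜 ι : Type*} [Field K] [Finite K] [Fintype ι] [NormedField 𝕜]

/-- The `L`-function `∑ u(f) X ^ deg(f)` of a multiplicative function `u` on monic polynomials, as a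
power series in `X = q⁻ˢ`. -/
noncomputable def monicLSeries (u : monicSubmonoid K →* 𝕜) : 𝕜⟦X⟧ :=
  ∑' f, gradedMonomial monicDegree u f

/-- The tuples in `squarefreeTuples` with product of degree `d`. -/
def squarefreeTuplesOfDegree (K ι : Type*) [Field K] [Fintype ι] (d : ℕ) :
    Set (ι → monicSubmonoid K) :=
  {f ∈ squarefreeTuples K ι | (tupleHom (fun _ => monicDegree) f).toAdd = d}

/-- The generating series of `∏ i, u i (f i)` over tuples `f` with square-free product, graded by
the degree of the product. -/
noncomputable def squarefreeSeries (u : ι → monicSubmonoid K →* 𝕜) : 𝕜⟦X⟧ :=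
  ∑' f : squarefreeTuples K ι, gradedMonomial (tupleHom fun _ => monicDegree) (tupleHom u) f

lemma coeff_monicLSeries (u : monicSubmonoid K →* 𝕜) (n : ℕ) :
    PowerSeries.coeff n (monicLSeries u) = ∑ᶠ f ∈ {f | (monicDegree f).toAdd = n}, u f := by
  rw [monicLSeries, ← tsum_univ, coeff_tsum_gradedMonomial finite_monicDegree_eq]
  simp only [Set.mem_univ, true_and]

lemma coeff_squarefreeSeries (u : ι → monicSubmonoid K →* 𝕜) (d : ℕ) :
    PowerSeries.coeff d (squarefreeSeries u) =
      ∑ᶠ f ∈ squarefreeTuplesOfDegree K ι d, tupleHom u f :=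
  coeff_tsum_gradedMonomial finite_tupleHom_monicDegree_eq _ _ d

lemma monicLSeries_mul_inv (u : monicSubmonoid K →* 𝕜) :
    monicLSeries u * (monicLSeries u)⁻¹ = 1 := by
  refine PowerSeries.mul_inv_cancel _ ?_
  rw [← PowerSeries.coeff_zero_eq_constantCoeff_apply, coeff_monicLSeries]
  simp only [toAdd_monicDegree_eq_zero_iff]
  simp

variable [CompleteSpace 𝕜]

lemma hasProd_monicLSeries_inv (u : monicSubmonoid K →* 𝕜) :
    HasProd (fun Q : MonicIrreducible K => 1 - gradedMonomial monicDegree u Q)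
      (monicLSeries u)⁻¹ := by
  have hsum : Summable (gradedMonomial monicDegree u) :=
    summable_gradedMonomial finite_monicDegree_eq u
  exact hasProd_one_sub (R := 𝕜⟦X⟧) (m := gradedMonomial monicDegree u) hsum
    (monicLSeries_mul_inv u)

lemma hasProd_squarefreeSeries (u : ι → monicSubmonoid K →* 𝕜) :
    HasProd (fun Q : MonicIrreducible K => 1 + ∑ i, gradedMonomial monicDegree (u i) Q)
      (squarefreeSeries u) := by
  let W : (ι → monicSubmonoid K) →* 𝕜⟦X⟧ :=
    gradedMonomial (tupleHom fun _ => monicDegree) (tupleHom u)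
  have hW : Summable W := summable_gradedMonomial finite_tupleHom_monicDegree_eq (tupleHom u)
  have hsingle (i : ι) (Q : monicSubmonoid K) :
      W (Pi.mulSingle i Q) = gradedMonomial monicDegree (u i) Q := by
    simp only [W, gradedMonomial, MonoidHom.coe_mk, OneHom.coe_mk, tupleHom_mulSingle]
  simp only [← hsingle]
  exact hasProd_one_add_sum_mulSingle (R := 𝕜⟦X⟧) (W := W) hW

lemma hasProd_squarefreeSeries_mul_prod_inv (u : ι → monicSubmonoid K →* 𝕜) :
    HasProd (fun Q : MonicIrreducible K => (1 + ∑ i, gradedMonomial monicDegree (u i) Q) *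
        ∏ i, (1 - gradedMonomial monicDegree (u i) Q))
      (squarefreeSeries u * ∏ i, (monicLSeries (u i))⁻¹) :=
  (hasProd_squarefreeSeries u).mul (hasProd_prod fun i _ => hasProd_monicLSeries_inv (u i))

lemma weightedNorm_squarefreeSeries_mul_prod_inv_ne_top {u : ι → monicSubmonoid K →* 𝕜}
    (hu : ∀ i f, ‖u i f‖ ≤ 1) {t : ℝ≥0} (ht : Nat.card K * t ^ 2 < 1) :
    weightedNorm t (squarefreeSeries u * ∏ i, (monicLSeries (u i))⁻¹) ≠ ∞ := by
  have ht1 : t ≤ 1 := by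
    have hcard : (1 : ℝ≥0) ≤ Nat.card K := by exact_mod_cast Nat.card_pos
    exact (pow_le_one_iff two_ne_zero).1 ((le_mul_of_one_le_left' hcard).trans ht.le)
  have hnorm (Q : MonicIrreducible K) (i : ι) :
      weightedNorm t (gradedMonomial monicDegree (u i) Q) ≤
        (t : ℝ≥0∞) ^ (monicDegree Q.1).toAdd := by
    refine (weightedNorm_monomial t _ _).trans_le (mul_le_of_le_one_left' ?_)
    rw [enorm_eq_nnnorm]
    exact_mod_cast hu i Q
  refine weightedNorm_ne_top_of_hasProd t (hasProd_squarefreeSeries_mul_prod_inv u) ?_ fun Q =>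
    weightedNorm_one_add_sum_mul_prod_le t Finset.univ
      (pow_le_one' (ENNReal.coe_le_one_iff.2 ht1) _) (hnorm Q)
  rw [ENNReal.tsum_mul_left]
  simp only [pow_right_comm (t : ℝ≥0∞) _ 2]
  refine ENNReal.mul_ne_top (ENNReal.sum_ne_top.2 fun j _ => by finiteness) ?_
  exact_mod_cast tsum_monicIrreducible_pow_ne_top (s := t ^ 2) ht

lemma weightedNorm_squarefreeSeries_mul_inv_ne_top {u : ι → monicSubmonoid K →* 𝕜}
    (hu : ∀ i f, ‖u i f‖ ≤ 1) {i₀ : ι}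
    (hL : ∀ i ≠ i₀, ∃ N, ∀ n, N ≤ n → PowerSeries.coeff n (monicLSeries (u i)) = 0)
    {t : ℝ≥0} (ht : Nat.card K * t ^ 2 < 1) :
    weightedNorm t (squarefreeSeries u * (monicLSeries (u i₀))⁻¹) ≠ ∞ := by
  have hfactor : squarefreeSeries u * (monicLSeries (u i₀))⁻¹ =
      squarefreeSeries u * (∏ i, (monicLSeries (u i))⁻¹) *
        ∏ i ∈ Finset.univ.erase i₀, monicLSeries (u i) := by
    have hcancel : (∏ i ∈ Finset.univ.erase i₀, (monicLSeries (u i))⁻¹) *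
        ∏ i ∈ Finset.univ.erase i₀, monicLSeries (u i) = 1 := by
      rw [← Finset.prod_mul_distrib]
      exact Finset.prod_eq_one fun i _ => (mul_comm _ _).trans (monicLSeries_mul_inv (u i))
    rw [← Finset.mul_prod_erase _ _ (Finset.mem_univ i₀), mul_assoc, mul_assoc, hcancel, mul_one]
  rw [hfactor]
  refine ne_top_of_le_ne_top (ENNReal.mul_ne_top
    (weightedNorm_squarefreeSeries_mul_prod_inv_ne_top hu ht)
    (ENNReal.prod_ne_top fun i hi => ?_)) ((weightedNorm_mul_le t _ _).trans
      (mul_le_mul_right (weightedNorm_prod_le t _ _) _))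
  obtain ⟨N, hN⟩ := hL i (Finset.ne_of_mem_erase hi)
  exact weightedNorm_ne_top_of_coeff_eq_zero t hN

lemma coeff_squarefreeSeries_sub_isBigO {u : ι → monicSubmonoid K →* 𝕜}
    (hu : ∀ i f, ‖u i f‖ ≤ 1) {i₀ : ι}
    (hL : ∀ i ≠ i₀, ∃ N, ∀ n, N ≤ n → PowerSeries.coeff n (monicLSeries (u i)) = 0)
    {r : 𝕜} (hr : ‖r‖ = Nat.card K) (hL₀ : monicLSeries (u i₀) = .mk (r ^ ·))
    {t : ℝ≥0} (hrt : (Nat.card K : ℝ≥0)⁻¹ ≤ t) (ht : Nat.card K * t ^ 2 < 1) :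
    (fun d => PowerSeries.coeff d (squarefreeSeries u) -
      (∑' j, PowerSeries.coeff j (squarefreeSeries u * (monicLSeries (u i₀))⁻¹) * r⁻¹ ^ j) * r ^ d)
      =O[⊤] fun d => (t : ℝ)⁻¹ ^ d := by
  have hr0 : r ≠ 0 := norm_pos_iff.1 (hr ▸ Nat.cast_pos.2 Nat.card_pos)
  have hF : squarefreeSeries u =
      squarefreeSeries u * (monicLSeries (u i₀))⁻¹ * .mk (r ^ ·) := by
    rw [← hL₀, mul_assoc, mul_comm (monicLSeries _)⁻¹, monicLSeries_mul_inv, mul_one]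
  conv in PowerSeries.coeff _ (squarefreeSeries u) => rw [hF]
  refine coeff_mul_geometric_sub_isBigO hr0 ?_
    (weightedNorm_squarefreeSeries_mul_inv_ne_top hu hL ht)
  rw [hr]
  exact_mod_cast hrt

lemma exists_inv_le_and_mul_sq_lt_one {x ε : ℝ} (hx : 1 < x) (hε : 0 < ε) :
    ∃ t : ℝ, x⁻¹ ≤ t ∧ x * t ^ 2 < 1 ∧ t⁻¹ ≤ x ^ (1 / 2 + ε) := by
  have hx0 : 0 < x := one_pos.trans hx
  have hδ : 0 < min ε (1 / 2) := by positivity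
  refine ⟨x ^ (-(1 / 2 + min ε (1 / 2))), ?_, ?_, ?_⟩
  · rw [← Real.rpow_neg_one]
    exact Real.rpow_le_rpow_of_exponent_le hx.le (by linarith [min_le_right ε (1 / 2)])
  · rw [← Real.rpow_mul_natCast hx0.le, ← Real.rpow_one_add' hx0.le (by push_cast; linarith)]
    exact Real.rpow_lt_one_of_one_lt_of_neg hx (by push_cast; linarith)
  · rw [Real.rpow_neg hx0.le, inv_inv]
    exact Real.rpow_le_rpow_of_exponent_le hx.le (by linarith [min_le_left ε (1 / 2)])

theorem exists_coeff_squarefreeSeries_sub_isBigO {u : ι → monicSubmonoid K →* 𝕜}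
    (hu : ∀ i f, ‖u i f‖ ≤ 1) {i₀ : ι}
    (hL : ∀ i ≠ i₀, ∃ N, ∀ n, N ≤ n → PowerSeries.coeff n (monicLSeries (u i)) = 0)
    {r : 𝕜} (hr : ‖r‖ = Nat.card K) (hL₀ : monicLSeries (u i₀) = .mk (r ^ ·)) :
    ∃ c : 𝕜, ∀ ε : ℝ, 0 < ε →
      (fun d => PowerSeries.coeff d (squarefreeSeries u) - c * r ^ d) =O[⊤] fun d : ℕ =>
        (Nat.card K : ℝ) ^ ((1 / 2 + ε) * d) := by
  refine ⟨∑' j, PowerSeries.coeff j (squarefreeSeries u * (monicLSeries (u i₀))⁻¹) * r⁻¹ ^ j,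
    fun ε hε => ?_⟩
  obtain ⟨t, hqt, hqt2, ht⟩ := exists_inv_le_and_mul_sq_lt_one
    (x := Nat.card K) (by exact_mod_cast Finite.one_lt_card) hε
  have ht0 : 0 ≤ t := (inv_nonneg.2 (Nat.cast_nonneg _)).trans hqt
  lift t to ℝ≥0 using ht0
  refine (coeff_squarefreeSeries_sub_isBigO hu hL hr hL₀ (t := t) (by exact_mod_cast hqt)
    (by exact_mod_cast hqt2)).trans (.of_norm_le fun d => ?_)
  rw [Real.norm_of_nonneg (by positivity), Real.rpow_mul_natCast (Nat.cast_nonneg _)]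
  exact pow_le_pow_left₀ (by positivity) ht d

end SquarefreeTuples

section CharacterSums

variable {K 𝕜 : Type*} [Field K] {P : K[X]}

lemma degree_modByMonicHom_lt (hP : P.Monic) (x : AdjoinRoot P) :
    (AdjoinRoot.modByMonicHom hP x).degree < P.degree := by
  obtain ⟨f, rfl⟩ := AdjoinRoot.mk_surjective x
  rw [AdjoinRoot.modByMonicHom_mk]
  exact degree_modByMonic_lt f hP

lemma degree_modByMonicHom_lt_mul (hP : P.Monic) (x : AdjoinRoot P) (g : monicSubmonoid K) :
    (AdjoinRoot.modByMonicHom hP x).degree < (P * g).degree :=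
  (degree_modByMonicHom_lt hP x).trans_le
    (degree_le_of_dvd (dvd_mul_right _ _) (hP.mul g.2).ne_zero)

/-- The monic polynomial `P * g + r` with quotient `g` and remainder `r ≡ x` modulo `P`. -/
noncomputable def monicOfQuotientResidue (hP : P.Monic) (p : monicSubmonoid K × AdjoinRoot P) :
    monicSubmonoid K :=
  ⟨P * p.1 + AdjoinRoot.modByMonicHom hP p.2,
    (hP.mul p.1.2).add_of_left (degree_modByMonicHom_lt_mul hP p.2 p.1)⟩

lemma mk_monicOfQuotientResidue (hP : P.Monic) (p : monicSubmonoid K × AdjoinRoot P) :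
    AdjoinRoot.mk P (monicOfQuotientResidue hP p) = p.2 := by
  rw [monicOfQuotientResidue, map_add, map_mul, AdjoinRoot.mk_self, zero_mul, zero_add]
  exact AdjoinRoot.mk_leftInverse hP p.2

lemma toAdd_monicDegree_monicOfQuotientResidue (hP : P.Monic)
    (p : monicSubmonoid K × AdjoinRoot P) :
    (monicDegree (monicOfQuotientResidue hP p)).toAdd =
      P.natDegree + (monicDegree p.1).toAdd := by
  rw [toAdd_monicDegree, toAdd_monicDegree, ← hP.natDegree_mul p.1.2]
  exact natDegree_add_eq_left_of_degree_lt (degree_modByMonicHom_lt_mul hP p.2 p.1)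

lemma monicOfQuotientResidue_injective (hP : P.Monic) :
    Function.Injective (monicOfQuotientResidue hP) := by
  intro p p' h
  have hres : p.2 = p'.2 := by
    rw [← mk_monicOfQuotientResidue hP p, h, mk_monicOfQuotientResidue]
  have hquot : P * (p.1 : K[X]) = P * p'.1 := by
    have hval := congrArg Subtype.val h
    simpa only [monicOfQuotientResidue, hres, add_left_inj] using hval
  exact Prod.ext (Subtype.ext (mul_left_cancel₀ hP.ne_zero hquot)) hres

lemma exists_monicOfQuotientResidue_eq (hP : P.Monic) {f : monicSubmonoid K}
    (hf : P.natDegree ≤ (monicDegree f).toAdd) : ∃ p, monicOfQuotientResidue hP p = f := by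
  have hquot : ((f : K[X]) /ₘ P).Monic := by
    refine (leadingCoeff_divByMonic_of_monic hP ?_).trans f.2
    rw [degree_eq_natDegree hP.ne_zero, degree_eq_natDegree f.2.ne_zero]
    exact_mod_cast hf
  refine ⟨(⟨f /ₘ P, hquot⟩, AdjoinRoot.mk P f), Subtype.ext ?_⟩
  simp only [monicOfQuotientResidue, AdjoinRoot.modByMonicHom_mk]
  rw [add_comm, modByMonic_add_div]

lemma bijOn_monicOfQuotientResidue (hP : P.Monic) (n : ℕ) :
    Set.BijOn (monicOfQuotientResidue hP) ({g | (monicDegree g).toAdd = n} ×ˢ Set.univ)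
      {f | (monicDegree f).toAdd = P.natDegree + n} := by
  refine ⟨fun p hp => ?_, (monicOfQuotientResidue_injective hP).injOn, fun f hf => ?_⟩
  · exact (toAdd_monicDegree_monicOfQuotientResidue hP p).trans (congrArg _ hp.1)
  · obtain ⟨p, rfl⟩ := exists_monicOfQuotientResidue_eq hP (hf ▸ Nat.le_add_right _ _)
    rw [Set.mem_ofPred_eq, toAdd_monicDegree_monicOfQuotientResidue] at hf
    exact ⟨p, ⟨Nat.add_left_cancel hf, Set.mem_univ _⟩, rfl⟩

/-- The completely multiplicative function `f ↦ a ^ deg(f)`, whose `L`-series is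
`1 / (1 - q a X)`. -/
noncomputable def degreeTwist [Monoid 𝕜] (a : 𝕜) : monicSubmonoid K →* 𝕜 :=
  (powersHom 𝕜 a).comp monicDegree

lemma degreeTwist_apply [Monoid 𝕜] (a : 𝕜) (f : monicSubmonoid K) :
    degreeTwist a f = a ^ (f : K[X]).natDegree := rfl

/-- The character `f ↦ χ (f mod P)` of monic polynomials. -/
noncomputable def residueHom [CommMonoidWithZero 𝕜] (χ : MulChar (AdjoinRoot P) 𝕜) :
    monicSubmonoid K →* 𝕜 :=
  χ.toMonoidHom.comp ((AdjoinRoot.mk P : K[X] →* AdjoinRoot P).comp (monicSubmonoid K).subtype)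

lemma residueHom_apply [CommMonoidWithZero 𝕜] (χ : MulChar (AdjoinRoot P) 𝕜)
    (f : monicSubmonoid K) : residueHom χ f = χ (AdjoinRoot.mk P f) := rfl

variable [Finite K]

lemma finite_adjoinRoot (hP : P.Monic) : Finite (AdjoinRoot P) :=
  have : Module.Finite K (AdjoinRoot P) := hP.finite_adjoinRoot
  Module.finite_of_finite K

lemma finsum_monicDegree_comp_mk [AddCommMonoid 𝕜] [Fintype (AdjoinRoot P)] (hP : P.Monic)
    (φ : AdjoinRoot P → 𝕜) (n : ℕ) :
    ∑ᶠ f ∈ {f : monicSubmonoid K | (monicDegree f).toAdd = P.natDegree + n},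
      φ (AdjoinRoot.mk P f) = Nat.card K ^ n • ∑ x, φ x := by
  rw [← finsum_mem_eq_of_bijOn _ (bijOn_monicOfQuotientResidue hP n)
    (f := fun p => φ p.2) fun p _ => by rw [mk_monicOfQuotientResidue]]
  have hprod : ({g | (monicDegree g).toAdd = n} ×ˢ Set.univ : Set (monicSubmonoid K × AdjoinRoot P))
      = ((finite_monicDegree_eq n).toFinset ×ˢ Finset.univ :
        Finset (monicSubmonoid K × AdjoinRoot P)) := by
    rw [Finset.coe_product, Set.Finite.coe_toFinset, Finset.coe_univ]
  simp only [hprod, finsum_mem_coe_finset, Finset.sum_product, Finset.sum_const]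
  rw [← ncard_monicDegree_eq, Set.ncard_eq_toFinset_card _ (finite_monicDegree_eq n)]

variable [NormedField 𝕜]

lemma norm_residueHom_le_one (hP : P.Monic) (χ : MulChar (AdjoinRoot P) 𝕜)
    (f : monicSubmonoid K) : ‖residueHom χ f‖ ≤ 1 := by
  have := finite_adjoinRoot hP
  rw [residueHom_apply]
  by_cases hf : IsUnit (AdjoinRoot.mk P (f : K[X]))
  · exact (((χ : AdjoinRoot P →* 𝕜).isOfFinOrder
      (Units.isOfFinOrder_val.2 (isOfFinOrder_of_finite hf.unit))).norm_eq_one).le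
  · rw [χ.map_nonunit hf, norm_zero]
    exact zero_le_one

lemma monicLSeries_degreeTwist (a : 𝕜) :
    monicLSeries (degreeTwist a : monicSubmonoid K →* 𝕜) = .mk ((Nat.card K * a) ^ ·) := by
  ext n
  have hconst : ∀ f ∈ {f : monicSubmonoid K | (monicDegree f).toAdd = n},
      degreeTwist a f = a ^ n := by
    rintro f rfl
    rfl
  rw [coeff_monicLSeries, finsum_mem_congr rfl hconst, PowerSeries.coeff_mk,
    finsum_mem_eq_finite_toFinset_sum _ (finite_monicDegree_eq n), Finset.sum_const,
    ← Set.ncard_eq_toFinset_card _ (finite_monicDegree_eq n), ncard_monicDegree_eq, nsmul_eq_mul,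
    Nat.cast_pow, mul_pow]

lemma coeff_monicLSeries_residueHom_mul_degreeTwist (hP : P.Monic)
    {χ : MulChar (AdjoinRoot P) 𝕜} (hχ : χ ≠ 1) (a : 𝕜) {n : ℕ} (hn : P.natDegree ≤ n) :
    PowerSeries.coeff n (monicLSeries (residueHom χ * degreeTwist a)) = 0 := by
  have := finite_adjoinRoot hP
  have := Fintype.ofFinite (AdjoinRoot P)
  obtain ⟨m, rfl⟩ := Nat.exists_eq_add_of_le hn
  have htwist : ∀ f ∈ {f : monicSubmonoid K | (monicDegree f).toAdd = P.natDegree + m},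
      (residueHom χ * degreeTwist a : monicSubmonoid K →* 𝕜) f =
        χ (AdjoinRoot.mk P f) * a ^ (P.natDegree + m) := by
    rintro f hf
    rw [← hf]
    rfl
  rw [coeff_monicLSeries, finsum_mem_congr rfl htwist,
    finsum_monicDegree_comp_mk hP fun x => χ x * a ^ (P.natDegree + m), ← Finset.sum_mul,
    MulChar.sum_eq_zero_of_ne_one hχ, zero_mul, smul_zero]

end CharacterSums

section QuadraticSymbol

variable {K : Type*} [Field K] {P : K[X]}

lemma chiP_eq_quadraticChar [Fact (Irreducible P)] [Fintype (AdjoinRoot P)] (F : K[X]) :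
    chiP P F = quadraticChar (AdjoinRoot P) (AdjoinRoot.mk P F) := by
  have hsquare : (∃ G, P ∣ F - G ^ 2) ↔ IsSquare (AdjoinRoot.mk P F) := by
    simp only [isSquare_iff_exists_sq, AdjoinRoot.mk_surjective.exists, ← map_pow,
      AdjoinRoot.mk_eq_mk]
  rw [chiP, quadraticChar_apply, quadraticCharFun]
  simp only [hsquare, AdjoinRoot.mk_eq_zero]

variable [Finite K]

lemma exists_mulChar_eq_chiP (hK : ringChar K ≠ 2) (hP : P.Monic) (hPirr : Irreducible P) :
    ∃ χ : MulChar (AdjoinRoot P) ℝ, χ ≠ 1 ∧ ∀ F, χ (AdjoinRoot.mk P F) = chiP P F := by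
  have : Fact (Irreducible P) := ⟨hPirr⟩
  have := finite_adjoinRoot hP
  have := Fintype.ofFinite (AdjoinRoot P)
  have hchar : ringChar (AdjoinRoot P) ≠ 2 := by
    rwa [← Algebra.ringChar_eq K (AdjoinRoot P)]
  refine ⟨(quadraticChar (AdjoinRoot P)).ringHomComp (Int.castRingHom ℝ), ?_, fun F => ?_⟩
  · exact (MulChar.ringHomComp_ne_one_iff Int.cast_injective).2 (quadraticChar_ne_one hchar)
  · rw [MulChar.ringHomComp_apply, chiP_eq_quadraticChar, eq_intCast]

end QuadraticSymbol

section TwistedTriples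

lemma cast_intUnits_pow (a : ℤˣ) (n : ℕ) :
    ((a : ℤ) : ℝ) ^ n = if Even n then 1 else ((a : ℤ) : ℝ) := by
  obtain rfl | rfl := Int.units_eq_one_or a
  · simp
  · simp [neg_one_pow_eq_ite]

lemma abs_cast_intUnits (a : ℤˣ) : |((a : ℤ) : ℝ)| = 1 := by
  rw [← Int.cast_abs, Int.isUnit_iff_abs_eq.1 a.isUnit, Int.cast_one]

lemma sum_intUnits_pow_add {k : ℕ} (hk : k ≤ 1) (n : ℕ) :
    ∑ a : ℤˣ, ((a : ℤ) : ℝ) ^ (k + n) = if n % 2 = k then 2 else 0 := by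
  have heven : Even (k + n) ↔ n % 2 = k := by
    rw [Nat.even_iff]
    lia
  simp only [cast_intUnits_pow, heven]
  split_ifs <;> simp

lemma sum_mul_cast_intUnits_pow {ι : Type*} [Fintype ι] (w : ι → ℝ) (s : ι → ℤˣ) (x : ℝ) (d : ℕ) :
    ∑ i, w i * (x * ((s i : ℤ) : ℝ)) ^ d =
      (if Even d then ∑ i, w i else ∑ i, w i * ((s i : ℤ) : ℝ)) * x ^ d := by
  simp only [mul_pow, cast_intUnits_pow]
  split_ifs
  · simp only [mul_one, Finset.sum_mul]
  · simp only [Finset.sum_mul, mul_comm (x ^ d), mul_assoc]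

variable {K : Type*} [Field K] {P : K[X]}

/-- The twists of `(χ, χ, 1)` by the signs `a ^ deg(f₁ f₃)` and `b ^ deg(f₂ f₃)`, which detect the
parities of `deg(f₁ f₃)` and `deg(f₂ f₃)`. -/
noncomputable def twistedTriple (χ : monicSubmonoid K →* ℝ) (p : ℤˣ × ℤˣ) :
    Fin 3 → monicSubmonoid K →* ℝ :=
  ![χ * degreeTwist ((p.1 : ℤ) : ℝ), χ * degreeTwist ((p.2 : ℤ) : ℝ),
    degreeTwist (((p.1 * p.2 : ℤˣ) : ℤ) : ℝ)]

lemma tupleHom_twistedTriple (χ : monicSubmonoid K →* ℝ) (p : ℤˣ × ℤˣ)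
    (f : Fin 3 → monicSubmonoid K) :
    tupleHom (twistedTriple χ p) f = χ (f 0 * f 1) *
      (((p.1 : ℤ) : ℝ) ^ (f 0 * f 2 : K[X]).natDegree *
        ((p.2 : ℤ) : ℝ) ^ (f 1 * f 2 : K[X]).natDegree) := by
  simp only [tupleHom_apply, Fin.prod_univ_three, twistedTriple, Matrix.cons_val,
    MonoidHom.mul_apply, degreeTwist_apply, map_mul, (f 0).2.natDegree_mul (f 2).2,
    (f 1).2.natDegree_mul (f 2).2, Units.val_mul, Int.cast_mul]
  ring

lemma norm_twistedTriple_le_one {χ : monicSubmonoid K →* ℝ} (hχ : ∀ f, ‖χ f‖ ≤ 1) (p : ℤˣ × ℤˣ)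
    (i : Fin 3) (f : monicSubmonoid K) : ‖twistedTriple χ p i f‖ ≤ 1 := by
  have htwist (a : ℤˣ) : ‖degreeTwist ((a : ℤ) : ℝ) f‖ = 1 := by
    rw [degreeTwist_apply, norm_pow, Real.norm_eq_abs, abs_cast_intUnits, one_pow]
  fin_cases i
  · exact (norm_mul _ _).trans_le (by rw [htwist, mul_one]; exact hχ f)
  · exact (norm_mul _ _).trans_le (by rw [htwist, mul_one]; exact hχ f)
  · exact (htwist _).le

/-- The coefficient of the twist by `p = (a, b)` in the expansion of the indicator function of
`deg(f₁ f₃) ≡ k1` and `deg(f₂ f₃) ≡ k2` modulo 2, up to the factor `1 / 4`. -/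
def parityWeight (k1 k2 : ℕ) (p : ℤˣ × ℤˣ) : ℝ :=
  ((p.1 : ℤ) : ℝ) ^ k1 * ((p.2 : ℤ) : ℝ) ^ k2

/-- The index set of the sum `Nk k1 k2 d P`, as a set of families `Fin 3 → monicSubmonoid K`. -/
def parityTriples (K : Type*) [Field K] (k1 k2 d : ℕ) : Set (Fin 3 → monicSubmonoid K) :=
  {f ∈ squarefreeTuplesOfDegree K (Fin 3) d |
    (f 0 * f 2 : K[X]).natDegree % 2 = k1 ∧ (f 1 * f 2 : K[X]).natDegree % 2 = k2}

lemma mem_squarefreeTuplesOfDegree_fin_three {d : ℕ} {f : Fin 3 → monicSubmonoid K} :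
    f ∈ squarefreeTuplesOfDegree K (Fin 3) d ↔
      Squarefree (f 0 * f 1 * f 2 : K[X]) ∧ (f 0 * f 1 * f 2 : K[X]).natDegree = d := by
  rw [squarefreeTuplesOfDegree, Set.mem_sep_iff, squarefreeTuples, Set.mem_ofPred_eq,
    tupleHom_apply, ← map_prod, toAdd_monicDegree, Fin.prod_univ_three, Submonoid.coe_mul,
    Submonoid.coe_mul]

lemma bijOn_parityTriples (k1 k2 d : ℕ) :
    Set.BijOn (fun f : Fin 3 → monicSubmonoid K => ((f 0 : K[X]), (f 1 : K[X]), (f 2 : K[X])))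
      (parityTriples K k1 k2 d)
      {t | t.1.Monic ∧ t.2.1.Monic ∧ t.2.2.Monic ∧
        Squarefree (t.1 * t.2.1 * t.2.2) ∧ (t.1 * t.2.1 * t.2.2).natDegree = d ∧
        (t.1 * t.2.2).natDegree % 2 = k1 ∧ (t.2.1 * t.2.2).natDegree % 2 = k2} := by
  refine ⟨fun f hf => ?_, fun f _ g _ hfg => ?_, fun t ht => ?_⟩
  · obtain ⟨hsq, hdeg⟩ := mem_squarefreeTuplesOfDegree_fin_three.1 hf.1
    exact ⟨(f 0).2, (f 1).2, (f 2).2, hsq, hdeg, hf.2⟩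
  · simp only [Prod.mk.injEq, SetLike.coe_eq_coe] at hfg
    ext1 i
    fin_cases i
    exacts [hfg.1, hfg.2.1, hfg.2.2]
  · obtain ⟨h₁, h₂, h₃, hsq, hdeg, hpar⟩ := ht
    exact ⟨![⟨t.1, h₁⟩, ⟨t.2.1, h₂⟩, ⟨t.2.2, h₃⟩],
      ⟨mem_squarefreeTuplesOfDegree_fin_three.2 ⟨hsq, hdeg⟩, hpar⟩, rfl⟩

lemma Nk_eq_finsum_parityTriples (k1 k2 d : ℕ) (P : K[X]) :
    Nk k1 k2 d P = ∑ᶠ f ∈ parityTriples K k1 k2 d, chiP P (f 0 * f 1) := by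
  rw [Nk]
  exact (finsum_mem_eq_of_bijOn _ (bijOn_parityTriples k1 k2 d) fun f _ => rfl).symm

lemma sum_parityWeight_mul_tupleHom_twistedTriple {k1 k2 : ℕ} (hk1 : k1 ≤ 1) (hk2 : k2 ≤ 1)
    (χ : monicSubmonoid K →* ℝ) (f : Fin 3 → monicSubmonoid K) :
    ∑ p, parityWeight k1 k2 p * tupleHom (twistedTriple χ p) f =
      if (f 0 * f 2 : K[X]).natDegree % 2 = k1 ∧ (f 1 * f 2 : K[X]).natDegree % 2 = k2
        then 4 * χ (f 0 * f 1) else 0 := by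
  calc ∑ p, parityWeight k1 k2 p * tupleHom (twistedTriple χ p) f
    _ = χ (f 0 * f 1) * ((∑ a : ℤˣ, ((a : ℤ) : ℝ) ^ (k1 + (f 0 * f 2 : K[X]).natDegree)) *
          ∑ b : ℤˣ, ((b : ℤ) : ℝ) ^ (k2 + (f 1 * f 2 : K[X]).natDegree)) := by
        rw [Finset.sum_mul_sum, ← Fintype.sum_prod_type', Finset.mul_sum]
        refine Finset.sum_congr rfl fun p _ => ?_
        rw [tupleHom_twistedTriple, parityWeight, pow_add, pow_add]
        ring
    _ = _ := by
        rw [sum_intUnits_pow_add hk1, sum_intUnits_pow_add hk2, ite_zero_mul_ite_zero, mul_ite,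
          mul_zero, mul_comm (χ _)]
        norm_num

variable [Finite K]

lemma four_mul_Nk_eq_sum {χ : MulChar (AdjoinRoot P) ℝ}
    (hχ : ∀ F, χ (AdjoinRoot.mk P F) = chiP P F) {k1 k2 : ℕ} (hk1 : k1 ≤ 1) (hk2 : k2 ≤ 1)
    (d : ℕ) :
    4 * (Nk k1 k2 d P : ℝ) = ∑ p, parityWeight k1 k2 p *
      PowerSeries.coeff d (squarefreeSeries (twistedTriple (residueHom χ) p)) := by
  have hfin : (squarefreeTuplesOfDegree K (Fin 3) d).Finite :=
    (finite_tupleHom_monicDegree_eq d).subset fun f hf => hf.2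
  have hpar : parityTriples K k1 k2 d = (hfin.toFinset.filter fun f =>
      (f 0 * f 2 : K[X]).natDegree % 2 = k1 ∧ (f 1 * f 2 : K[X]).natDegree % 2 = k2 :
        Finset (Fin 3 → monicSubmonoid K)) := by
    rw [Finset.coe_filter]
    simp only [Set.Finite.mem_toFinset, parityTriples]
  simp only [coeff_squarefreeSeries, finsum_mem_eq_finite_toFinset_sum _ hfin, Finset.mul_sum]
  rw [Finset.sum_comm]
  simp only [sum_parityWeight_mul_tupleHom_twistedTriple hk1 hk2]
  rw [Nk_eq_finsum_parityTriples, hpar, finsum_mem_coe_finset, Int.cast_sum, Finset.mul_sum,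
    Finset.sum_filter]
  simp only [residueHom_apply, Submonoid.coe_mul, hχ]

lemma four_mul_Nk_sub_eq_sum {χ : MulChar (AdjoinRoot P) ℝ}
    (hχ : ∀ F, χ (AdjoinRoot.mk P F) = chiP P F) {k1 k2 : ℕ} (hk1 : k1 ≤ 1) (hk2 : k2 ≤ 1)
    (c : ℤˣ × ℤˣ → ℝ) (x : ℝ) (d : ℕ) :
    4 * ((Nk k1 k2 d P : ℝ) - (if Even d then ∑ p, parityWeight k1 k2 p * c p else
      ∑ p, parityWeight k1 k2 p * c p * ((p.1 * p.2 : ℤˣ) : ℤ)) / 4 * x ^ d) =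
    ∑ p, parityWeight k1 k2 p *
      (PowerSeries.coeff d (squarefreeSeries (twistedTriple (residueHom χ) p)) -
        c p * (x * ((p.1 * p.2 : ℤˣ) : ℤ)) ^ d) := by
  simp only [mul_sub, Finset.sum_sub_distrib, ← mul_assoc, four_mul_Nk_eq_sum hχ hk1 hk2,
    sum_mul_cast_intUnits_pow]
  ring

lemma exists_coeff_squarefreeSeries_twistedTriple_sub_isBigO (hP : P.Monic)
    {χ : MulChar (AdjoinRoot P) ℝ} (hχ : χ ≠ 1) (p : ℤˣ × ℤˣ) :
    ∃ c : ℝ, ∀ ε : ℝ, 0 < ε →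
      (fun d => PowerSeries.coeff d (squarefreeSeries (twistedTriple (residueHom χ) p)) -
        c * (Nat.card K * ((p.1 * p.2 : ℤˣ) : ℤ)) ^ d) =O[⊤] fun d : ℕ =>
          (Nat.card K : ℝ) ^ ((1 / 2 + ε) * d) := by
  refine exists_coeff_squarefreeSeries_sub_isBigO (i₀ := 2)
    (norm_twistedTriple_le_one (norm_residueHom_le_one hP χ) p)
    (fun i hi => ⟨P.natDegree, fun n hn => ?_⟩) ?_ (monicLSeries_degreeTwist _)
  · fin_cases i
    · exact coeff_monicLSeries_residueHom_mul_degreeTwist hP hχ _ hn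
    · exact coeff_monicLSeries_residueHom_mul_degreeTwist hP hχ _ hn
    · exact absurd rfl hi
  · rw [norm_mul, Real.norm_natCast, Real.norm_eq_abs, abs_cast_intUnits, mul_one]

end TwistedTriples

/-- there are constants `C_even`, `C_odd` such that for every `ε > 0` there
is `C_ε` with `|N_{k1,k2}(d;P) - (C_{parity(d)}/4)·q^d| ≤ C_ε·q^{(1/2+ε)d}` for all `d`. -/
theorem stmt6 (q : ℕ) (hq_odd : Odd q) (hq_pp : IsPrimePow q)
    (Fq : Type) [Field Fq] [Fintype Fq] (hFq : Fintype.card Fq = q)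
    (P : Fq[X]) (hPmonic : P.Monic) (hPirr : Irreducible P)
    (k1 k2 : ℕ) (hk1 : k1 ≤ 1) (hk2 : k2 ≤ 1) :
    ∃ Ceven Codd : ℝ, ∀ ε : ℝ, 0 < ε → ∃ Cε : ℝ, ∀ d : ℕ,
      |((Nk k1 k2 d P : ℝ)) - (if Even d then Ceven else Codd) / 4 * (q : ℝ) ^ d| ≤
        Cε * (q : ℝ) ^ ((1 / 2 + ε) * (d : ℝ)) := by
  have hchar : ringChar Fq ≠ 2 := fun h =>
    Nat.not_odd_iff_even.2 (Nat.even_iff.2 (FiniteField.even_card_iff_char_two.1 h)) (hFq ▸ hq_odd)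
  obtain ⟨χ, hχ1, hχ⟩ := exists_mulChar_eq_chiP hchar hPmonic hPirr
  choose c hc using exists_coeff_squarefreeSeries_twistedTriple_sub_isBigO hPmonic hχ1
  refine ⟨∑ p, parityWeight k1 k2 p * c p,
    ∑ p, parityWeight k1 k2 p * c p * ((p.1 * p.2 : ℤˣ) : ℤ), fun ε hε => ?_⟩
  have herror := IsBigO.fun_sum fun p (_ : p ∈ Finset.univ) =>
    (hc p ε hε).const_mul_left (parityWeight k1 k2 p)
  simp only [← four_mul_Nk_sub_eq_sum hχ hk1 hk2] at herror
  obtain ⟨C, hC⟩ := isBigO_top.1 ((isBigO_const_mul_left_iff four_ne_zero).1 herror)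
  refine ⟨C, fun d => ?_⟩
  rw [← hFq, ← Nat.card_eq_fintype_card]
  exact (hC d).trans_eq (congrArg _ (Real.norm_of_nonneg (by positivity)))
end
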